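/- Let Λ be a cyclic Nakayama artin algebra of infinite global dimension given by an irredundant system of r monomial relations. Then φdim Λ ≤ 2r, and this bound is sharp: for every r there is such an algebra with φdim Λ = 2r. -/

import Mathlib

/-!
Common definitions: Igusa–Todorov φ-function, syzygies, and cyclic Nakayama
algebras presented by monomial relations, following E. Sen,
"The φ-dimension of cyclic Nakayama algebras".
-/

noncomputable section

namespace PhiDim

variable (Λ : Type) [Ring Λ]

/-- A module is *uniserial* if its submodules are totally ordered by inclusion. -/
def IsUniserial (M : ModuleCat.{0} Λ) : Prop :=
  ∀ N₁ N₂ : Submodule Λ M, N₁ ≤ N₂ ∨ N₂ ≤ N₁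

/-- A module is *indecomposable* if it is nonzero and admits no nontrivial
direct sum decomposition. -/
def Indec (M : ModuleCat.{0} Λ) : Prop :=
  Nontrivial M ∧ ∀ N N' : Submodule Λ M, IsCompl N N' → N = ⊥ ∨ N' = ⊥

/-- `X` is (isomorphic to) a direct summand of `M`. -/
def IsSummand (X M : ModuleCat.{0} Λ) : Prop :=
  ∃ N N' : Submodule Λ M, IsCompl N N' ∧ Nonempty (X ≃ₗ[Λ] N)

/-- `f : P → M` is a projective cover: `P` is projective, `f` is surjective and
its kernel is superfluous in `P`. -/
def IsProjCover {P M : ModuleCat.{0} Λ} (f : P →ₗ[Λ] M) : Prop :=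
  Module.Projective Λ P ∧ Function.Surjective f ∧
    ∀ N : Submodule Λ P, N ⊔ LinearMap.ker f = ⊤ → N = ⊤

/-- `Y` is (isomorphic to) the first syzygy `Ω M`, i.e. the kernel of a
projective cover of `M`. -/
def IsSyzygy (Y M : ModuleCat.{0} Λ) : Prop :=
  ∃ (P : ModuleCat.{0} Λ) (f : P →ₗ[Λ] M), IsProjCover Λ f ∧
    Nonempty (Y ≃ₗ[Λ] LinearMap.ker f)

/-- `Y` is (isomorphic to) the `n`-th syzygy `Ω^n M`. -/
def IsNthSyzygy : ℕ → ModuleCat.{0} Λ → ModuleCat.{0} Λ → Prop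
  | 0, Y, M => Nonempty (Y ≃ₗ[Λ] M)
  | n + 1, Y, M => ∃ Z : ModuleCat.{0} Λ, IsSyzygy Λ Z M ∧ IsNthSyzygy n Y Z

/-- `M` is `Ω`-periodic: `Ω^k M ≅ M` for some `k ≥ 1`. -/
def IsPeriodic (M : ModuleCat.{0} Λ) : Prop :=
  ∃ k : ℕ, 1 ≤ k ∧ IsNthSyzygy Λ k M M

/-- Projective dimension at most `n` (via minimal projective resolutions:
the `n`-th syzygy is projective). -/
def PdimLE (M : ModuleCat.{0} Λ) (n : ℕ) : Prop :=
  ∃ Y : ModuleCat.{0} Λ, IsNthSyzygy Λ n Y M ∧ Module.Projective Λ Y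

/-- `M` has infinite projective dimension. -/
def HasInfinitePdim (M : ModuleCat.{0} Λ) : Prop :=
  ¬ ∃ n : ℕ, PdimLE Λ M n

/-- The (left) global dimension is at most `n`: every finitely generated module
has projective dimension at most `n`. -/
def GlobalDimLE (n : ℕ) : Prop :=
  ∀ M : ModuleCat.{0} Λ, Module.Finite Λ M → PdimLE Λ M n

/-- `Λ` has infinite global dimension. -/
def HasInfiniteGlobalDim : Prop := ¬ ∃ n : ℕ, GlobalDimLE Λ n

/-- `M` has composition length `n`. -/
def HasLength (M : ModuleCat.{0} Λ) (n : ℕ) : Prop :=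
  ∃ s : CompositionSeries (Submodule Λ M), s.head = ⊥ ∧ s.last = ⊤ ∧ s.length = n

/-- The socle of a uniserial module: the smallest nonzero submodule. -/
def socle (M : Type) [AddCommGroup M] [Module Λ M] : Submodule Λ M :=
  sInf {N : Submodule Λ M | N ≠ ⊥}

/-- The radical of a uniserial (local) module: the largest proper submodule. -/
def radical (M : Type) [AddCommGroup M] [Module Λ M] : Submodule Λ M :=
  sSup {N : Submodule Λ M | N ≠ ⊤}

/-- `soc M ≅ T`. -/
def SocIso (M T : ModuleCat.{0} Λ) : Prop :=
  Nonempty (socle Λ M ≃ₗ[Λ] T)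

/-- `top M = M / rad M ≅ T`. -/
def TopIso (M T : ModuleCat.{0} Λ) : Prop :=
  Nonempty ((M ⧸ radical Λ M) ≃ₗ[Λ] T)

/-- `T` is a composition factor (a simple subquotient) of `M`. -/
def IsCompFactorOf (T M : ModuleCat.{0} Λ) : Prop :=
  ∃ (N₁ : Submodule Λ M) (N₀ : Submodule Λ N₁),
    Nonempty ((N₁ ⧸ N₀) ≃ₗ[Λ] T)

/-- The number of composition factors of a composition series `s` of `M`
isomorphic to `T`. -/
def factorCount (M : ModuleCat.{0} Λ) (s : CompositionSeries (Submodule Λ M))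
    (T : ModuleCat.{0} Λ) : ℕ :=
  Nat.card {i : Fin s.length //
    Nonempty ((s i.succ ⧸ Submodule.comap (s i.succ).subtype (s i.castSucc)) ≃ₗ[Λ] T)}

/-! ### The Igusa–Todorov function φ -/

/-- Finitely generated modules. -/
def FGMod := {M : ModuleCat.{0} Λ // Module.Finite Λ M}

/-- Generators of the relations defining `K₀`: `[C] - [A] - [B]` for `C ≅ A ⊕ B`,
and `[P]` for `P` projective. -/
def K0RelSet : Set (FreeAbelianGroup (FGMod Λ)) :=
  {x | ∃ A B C : FGMod Λ, Nonempty ((C.1 : Type) ≃ₗ[Λ] ((A.1 : Type) × (B.1 : Type))) ∧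
        x = FreeAbelianGroup.of C - FreeAbelianGroup.of A - FreeAbelianGroup.of B} ∪
  {x | ∃ P : FGMod Λ, Module.Projective Λ P.1 ∧ x = FreeAbelianGroup.of P}

def K0Rel : AddSubgroup (FreeAbelianGroup (FGMod Λ)) :=
  AddSubgroup.closure (K0RelSet Λ)

/-- `K₀`: the free abelian group on finitely generated modules, modulo
`[A ⊕ B] = [A] + [B]` and `[P] = 0` for projective `P`. -/
def K0 := FreeAbelianGroup (FGMod Λ) ⧸ K0Rel Λ

instance : AddCommGroup (K0 Λ) := QuotientAddGroup.Quotient.addCommGroup _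

/-- The class `[M]` of a finitely generated module in `K₀`. -/
def classOf (M : FGMod Λ) : K0 Λ := QuotientAddGroup.mk (FreeAbelianGroup.of M)

/-- Generators of the subgroup `L^t ⟨add M⟩` of `K₀`: classes of `t`-th syzygies of
the indecomposable direct summands of `M`. -/
def addGens (M : ModuleCat.{0} Λ) (t : ℕ) : Set (K0 Λ) :=
  {k | ∃ X : ModuleCat.{0} Λ, Indec Λ X ∧ IsSummand Λ X M ∧
        ∃ Y : FGMod Λ, IsNthSyzygy Λ t Y.1 X ∧ k = classOf Λ Y}

/-- The rank of `L^t ⟨add M⟩`. -/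
def syzygyRank (M : ModuleCat.{0} Λ) (t : ℕ) : Cardinal :=
  Module.rank ℤ (AddSubgroup.closure (addGens Λ M t))

/-- The Igusa–Todorov function
`φ(M) = min { t | rank L^t ⟨add M⟩ = rank L^{t+j} ⟨add M⟩ for all j ≥ 1 }`. -/
def phi (M : ModuleCat.{0} Λ) : ℕ :=
  sInf {t : ℕ | ∀ j : ℕ, 1 ≤ j → syzygyRank Λ M (t + j) = syzygyRank Λ M t}

/-- `φdim Λ = sup { φ(M) | M a finitely generated Λ-module }`. -/
def phiDim : ℕ∞ := ⨆ M : FGMod Λ, (phi Λ M.1 : ℕ∞)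

/-- Isomorphism of modules as a setoid on `ModuleCat Λ`. -/
def isoSetoid : Setoid (ModuleCat.{0} Λ) where
  r M N := Nonempty (M ≃ₗ[Λ] N)
  iseqv := ⟨fun M => ⟨LinearEquiv.refl Λ M⟩, fun ⟨e⟩ => ⟨e.symm⟩, fun ⟨e⟩ ⟨f⟩ => ⟨e.trans f⟩⟩

/-- `α(X)`: the number of pairwise non-isomorphic, non-projective, indecomposable
direct summands of `X`. -/
def alpha (X : ModuleCat.{0} Λ) : ℕ :=
  Nat.card {c : Quotient (isoSetoid Λ) // ∃ Y : ModuleCat.{0} Λ,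
    Quotient.mk (isoSetoid Λ) Y = c ∧ Indec Λ Y ∧ ¬ Module.Projective Λ Y ∧ IsSummand Λ Y X}

/-! ### Cyclic Nakayama algebras presented by monomial relations -/

/-- A cyclic Nakayama artin algebra `Λ` on `N ≥ 3` vertices, presented by an
irredundant system of `r` monomial relations `α_{k_{2j}} ⋯ α_{k_{2j-1}} = 0`.

* `S i` (for `i : ZMod N`) are the simple modules attached to the vertices of the
  cyclic quiver, `P i` a projective cover of `S i`, and `c i` the composition length
  of `P i` (the Kupisch series).
* `layer` expresses that the arrows of the quiver are exactly `α_i : i → i+1`: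
  the radical of an indecomposable module with top `S i`, when nonzero, has top `S (i+1)`.
* `kOdd j = k_{2j-1}` and `kEven j = k_{2j}` record the start and end indices of the
  `j`-th relation; irredundancy and completeness of the system of relations is recorded
  by `relation_starts` (the chain of inclusions `P_v ↪ P_{v-1}` breaks exactly at the
  starting vertices of the relations); `relation_ends` says that the `j`-th relation
  is a path from `k_{2j-1}` to `k_{2j} + 1` consisting of `c (k_{2j-1})` arrows. -/
structure CyclicNakayama (R : Type) (Λ : Type) [CommRing R] [Ring Λ] [Algebra R Λ] where
  artinianBase : IsArtinianRing R
  finiteAlgebra : Module.Finite R Λ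
  N : ℕ
  three_le_N : 3 ≤ N
  r : ℕ
  one_le_r : 1 ≤ r
  S : ZMod N → ModuleCat.{0} Λ
  S_simple : ∀ i, IsSimpleModule Λ (S i)
  S_complete : ∀ T : ModuleCat.{0} Λ, IsSimpleModule Λ T → ∃ i, Nonempty (T ≃ₗ[Λ] S i)
  S_distinct : ∀ i j, Nonempty (S i ≃ₗ[Λ] S j) → i = j
  nakayama : ∀ M : ModuleCat.{0} Λ, Module.Finite Λ M → Indec Λ M → IsUniserial Λ M
  P : ZMod N → ModuleCat.{0} Λ
  P_finite : ∀ i, Module.Finite Λ (P i)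
  P_projective : ∀ i, Module.Projective Λ (P i)
  P_cover : ∀ i, ∃ f : P i →ₗ[Λ] S i, IsProjCover Λ f
  c : ZMod N → ℕ
  P_length : ∀ i, HasLength Λ (P i) (c i)
  two_le_c : ∀ i, 2 ≤ c i
  layer : ∀ M : ModuleCat.{0} Λ, Module.Finite Λ M → Indec Λ M → ∀ i : ZMod N,
    TopIso Λ M (S i) → radical Λ M ≠ ⊥ →
      TopIso Λ (ModuleCat.of Λ (radical Λ M)) (S (i + 1))
  kOdd : ZMod r → ZMod N
  kEven : ZMod r → ZMod N
  kOdd_mono : ∀ j j' : ZMod r, j.val < j'.val → (kOdd j).val < (kOdd j').val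
  relation_starts : ∀ v : ZMod N, (∃ j, kOdd j = v) ↔ c v ≠ c (v + 1) + 1
  relation_ends : ∀ j, kEven j + 1 = kOdd j + (c (kOdd j) : ZMod N)
  soc_min : ∀ j, SocIso Λ (P (kOdd j)) (S (kEven j))
  soc_classes : ∀ v : ZMod N, ∃ j, SocIso Λ (P v) (S (kEven j))

variable {R : Type} [CommRing R]
variable {Λ} [Algebra R Λ]

/-- `D` is (a representative of) the module `Δ_j`: a shortest indecomposable module
with top `S_{k_{2(j-1)} + 1}` and socle `S_{k_{2j}}`. -/
def IsDelta (pres : CyclicNakayama R Λ) (j : ZMod pres.r) (D : ModuleCat.{0} Λ) : Prop :=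
  Module.Finite Λ D ∧ Indec Λ D ∧
    TopIso Λ D (pres.S (pres.kEven (j - 1) + 1)) ∧ SocIso Λ D (pres.S (pres.kEven j)) ∧
    ∀ D' : ModuleCat.{0} Λ, Module.Finite Λ D' → Indec Λ D' →
      TopIso Λ D' (pres.S (pres.kEven (j - 1) + 1)) → SocIso Λ D' (pres.S (pres.kEven j)) →
      ∀ n n' : ℕ, HasLength Λ D n → HasLength Λ D' n' → n ≤ n'

/-- `M` is a `Δ`-module: it admits a finite filtration whose successive subquotients
are isomorphic to modules among `Δ_1, …, Δ_r`. -/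
def IsDeltaModule (pres : CyclicNakayama R Λ) (Δ : ZMod pres.r → ModuleCat.{0} Λ)
    (M : ModuleCat.{0} Λ) : Prop :=
  ∃ (n : ℕ) (F : Fin (n + 1) → Submodule Λ M), Monotone F ∧ F 0 = ⊥ ∧ F (Fin.last n) = ⊤ ∧
    ∀ i : Fin n, ∃ j : ZMod pres.r,
      Nonempty ((F i.succ ⧸ Submodule.comap (F i.succ).subtype (F i.castSucc)) ≃ₗ[Λ] Δ j)

end PhiDim

/-!
### Idea of the proof

**Syzygies as intervals.** Every indecomposable finitely generated module over a cyclic Nakayama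
algebra is uniserial, and is determined by its top `S a` and its length `n ≤ c a`. It is pictured
as an interval `[a, a + n)` on the cycle (`IsIv`), and its syzygy is the interval `[a + n, a + c a)`
(`stepIv`). Hence a double syzygy moves both end points of an interval by the self-map
`endOf v = v + c v` of the set of vertices (`stepIv_iterate_two_mul`).

**Upper bound.** The map `endOf` takes at most `r` values, one for each relation
(`ncard_range_endOf`), so that it is injective on the image of its `r`-th iterate. An indecomposable
module whose syzygies stay nonprojective for `2r` steps therefore reaches an interval with both end
points in the eventual image of `endOf`. The map `stepIv` restricts to an injective self-map of the
finite set of such intervals, so that all of them are `Ω`-periodic with a common period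
(`exists_period`). As the ranks of `L^t ⟨add M⟩` decrease with `t`, they are constant from `2r` on
(`phi_le_of_periodic`). That `L` is a well defined endomorphism of `K₀` is Schanuel's lemma
(`syzMap`).

**Sharpness.** Over `ℤ/2`, take `N = r + 2` vertices and the Kupisch series
`(2N - 1, 2N + 1, …, 2N + 1, 2N)`, which has exactly `r` relations (`NakData.start_iff`). The module
of length `N` with top `S (-1)` is its own syzygy, so that the global dimension is infinite. The
module `X = [0, N + 1)` stays nonprojective for `2r` steps and then becomes projective
(`sharp_iterate`). For `φ(X) = 2r` it remains to see that the class of a nonprojective module has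
positive rank in `K₀`; over a finite ring this is detected by the homomorphism
`M ↦ log #(Hom(M, T) / {maps factoring through a projective})` (`classOf_nontorsion`).

**Existence of the algebra.** The algebra is realized by operators on the space with basis the
paths (`Model.nakData`). The fields of `CyclicNakayama` are derived from the structure `NakData`,
which records the products of paths. The main point is that indecomposable modules are generated by
one homogeneous element (`NakData.exists_cyc_of_indec`): a homogeneous element of maximal nilpotency
order spans a submodule onto which there is a retraction.
-/

namespace PhiDim

/-! ### The syzygy endomorphism of `K₀` -/

section SyzygyMap

variable {Λ : Type} [Ring Λ]

lemma classOf_prod (A B C : FGMod Λ)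
    (h : Nonempty ((C.1 : Type) ≃ₗ[Λ] ((A.1 : Type) × (B.1 : Type)))) :
    classOf Λ C = classOf Λ A + classOf Λ B := by
  have h1 : (FreeAbelianGroup.of C - FreeAbelianGroup.of A - FreeAbelianGroup.of B) ∈ K0Rel Λ :=
    AddSubgroup.subset_closure (Or.inl ⟨A, B, C, h, rfl⟩)
  rw [← sub_eq_zero, ← sub_sub]
  exact (QuotientAddGroup.eq_zero_iff _).2 h1

lemma classOf_projective (P : FGMod Λ) (h : Module.Projective Λ P.1) : classOf Λ P = 0 :=
  (QuotientAddGroup.eq_zero_iff _).2 (AddSubgroup.subset_closure (Or.inr ⟨P, h, rfl⟩))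

lemma classOf_iso (A B : FGMod Λ) (h : Nonempty ((A.1 : Type) ≃ₗ[Λ] (B.1 : Type))) :
    classOf Λ A = classOf Λ B := by
  obtain ⟨e⟩ := h
  let Z : FGMod Λ := ⟨ModuleCat.of Λ PUnit, inferInstanceAs (Module.Finite Λ PUnit)⟩
  have hZ : classOf Λ Z = 0 :=
    classOf_projective Z (inferInstanceAs (Module.Projective Λ PUnit))
  have := classOf_prod B Z A
    ⟨e.trans (LinearEquiv.prodUnique (R := Λ) (M := B.1) (M₂ := PUnit)).symm⟩
  rw [this, hZ, add_zero]

/-- Schanuel's lemma: the kernels of two surjections from projective modules onto the same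
module become isomorphic after adding the projectives crosswise. Both sums are the kernel of
the map `P × Q → M`, up to a shear of `P × Q`. -/
lemma schanuel {P Q M : Type} [AddCommGroup P] [Module Λ P] [AddCommGroup Q] [Module Λ Q]
    [AddCommGroup M] [Module Λ M] [Module.Projective Λ P] [Module.Projective Λ Q]
    (p : P →ₗ[Λ] M) (q : Q →ₗ[Λ] M) (hp : Function.Surjective p) (hq : Function.Surjective q) :
    Nonempty ((LinearMap.ker p × Q) ≃ₗ[Λ] (LinearMap.ker q × P)) := by
  obtain ⟨h, hh⟩ := Module.projective_lifting_property q p hq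
  obtain ⟨g, hg⟩ := Module.projective_lifting_property p q hp
  have hh' : ∀ y, q (h y) = p y := fun y => LinearMap.congr_fun hh y
  have hg' : ∀ y, p (g y) = q y := fun y => LinearMap.congr_fun hg y
  refine ⟨LinearEquiv.ofLinearMap
    (LinearMap.prod (LinearMap.codRestrict _
      (LinearMap.snd Λ P Q + h ∘ₗ (LinearMap.fst Λ P Q - g ∘ₗ LinearMap.snd Λ P Q) |>.comp
        (LinearMap.prodMap (Submodule.subtype _) LinearMap.id)) ?_)
      ((LinearMap.fst Λ P Q - g ∘ₗ LinearMap.snd Λ P Q).comp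
        (LinearMap.prodMap (Submodule.subtype _) LinearMap.id)))
    (LinearMap.prod (LinearMap.codRestrict _
      (LinearMap.snd Λ Q P + g ∘ₗ (LinearMap.fst Λ Q P - h ∘ₗ LinearMap.snd Λ Q P) |>.comp
        (LinearMap.prodMap (Submodule.subtype _) LinearMap.id)) ?_)
      ((LinearMap.fst Λ Q P - h ∘ₗ LinearMap.snd Λ Q P).comp
        (LinearMap.prodMap (Submodule.subtype _) LinearMap.id))) ?_ ?_⟩
  · rintro ⟨⟨x, hx⟩, y⟩
    rw [LinearMap.mem_ker] at hx
    simp [hh', hg', hx]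
  · rintro ⟨⟨x, hx⟩, y⟩
    rw [LinearMap.mem_ker] at hx
    simp [hh', hg', hx]
  · apply LinearMap.ext
    rintro ⟨⟨x, hx⟩, y⟩
    ext <;> simp
  · apply LinearMap.ext
    rintro ⟨⟨x, hx⟩, y⟩
    ext <;> simp

/-- The product of two submodules, as a module, is the product of the modules. -/
def prodSubEquiv {P Q : Type} [AddCommGroup P] [Module Λ P] [AddCommGroup Q] [Module Λ Q]
    (U : Submodule Λ P) (V : Submodule Λ Q) : (U.prod V) ≃ₗ[Λ] (U × V) where
  toFun x := (⟨x.1.1, x.2.1⟩, ⟨x.1.2, x.2.2⟩)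
  invFun x := ⟨(x.1.1, x.2.1), ⟨x.1.2, x.2.2⟩⟩
  map_add' _ _ := rfl
  map_smul' _ _ := rfl
  left_inv _ := rfl
  right_inv _ := rfl

variable [IsNoetherianRing Λ]

/-- The kernel of a surjection from a finitely generated free module onto `M`. -/
def kerFree (M : FGMod Λ) : FGMod Λ :=
  haveI := M.2
  let f := Classical.choose_spec (Module.Finite.exists_fin' Λ M.1)
  ⟨ModuleCat.of Λ (LinearMap.ker (Classical.choose f)),
    inferInstanceAs (Module.Finite Λ (LinearMap.ker _))⟩

lemma classOf_kerFree (M : FGMod Λ) {P : Type} [AddCommGroup P] [Module Λ P]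
    [Module.Projective Λ P] [Module.Finite Λ P] (p : P →ₗ[Λ] M.1) (hp : Function.Surjective p)
    (Y : FGMod Λ) (e : (Y.1 : Type) ≃ₗ[Λ] LinearMap.ker p) :
    classOf Λ (kerFree M) = classOf Λ Y := by
  have := M.2
  let f := Classical.choose_spec (Module.Finite.exists_fin' Λ M.1)
  obtain ⟨s⟩ := schanuel (Classical.choose f) p (Classical.choose_spec f) hp
  let A : FGMod Λ := ⟨ModuleCat.of Λ P, inferInstanceAs (Module.Finite Λ P)⟩
  let B : FGMod Λ := ⟨ModuleCat.of Λ (Fin (Classical.choose (Module.Finite.exists_fin' Λ M.1)) → Λ),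
    inferInstanceAs (Module.Finite Λ (Fin _ → Λ))⟩
  have hA : classOf Λ A = 0 := classOf_projective A (inferInstanceAs (Module.Projective Λ P))
  have hB : classOf Λ B = 0 :=
    classOf_projective B (inferInstanceAs (Module.Projective Λ (Fin _ → Λ)))
  let C : FGMod Λ := ⟨ModuleCat.of Λ ((kerFree M).1 × P),
    haveI := (kerFree M).2; inferInstanceAs (Module.Finite Λ (_ × P))⟩
  have h1 := classOf_prod (kerFree M) A C ⟨LinearEquiv.refl Λ _⟩
  have h2 := classOf_prod Y B C ⟨s.trans (LinearEquiv.prodCongr e.symm (LinearEquiv.refl Λ _))⟩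
  rw [hA, add_zero] at h1
  rw [hB, add_zero] at h2
  rw [← h1, h2]

variable (Λ) in
/-- The endomorphism `L` of `K₀` induced by taking syzygies. By Schanuel's lemma it may be
computed from any surjection from a finitely generated projective module. -/
def syzMap : K0 Λ →+ K0 Λ :=
  QuotientAddGroup.lift (K0Rel Λ) (FreeAbelianGroup.lift fun M => classOf Λ (kerFree M)) <| by
    rw [K0Rel, AddSubgroup.closure_le]
    rintro x (⟨A, B, C, ⟨e⟩, rfl⟩ | ⟨P, hP, rfl⟩)
    · simp only [SetLike.mem_coe, AddMonoidHom.mem_ker, map_sub, FreeAbelianGroup.lift_apply_of]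
      have := A.2
      have := B.2
      obtain ⟨n, f, hf⟩ := Module.Finite.exists_fin' Λ A.1
      obtain ⟨m, g, hg⟩ := Module.Finite.exists_fin' Λ B.1
      let KA : FGMod Λ := ⟨ModuleCat.of Λ (LinearMap.ker f),
        inferInstanceAs (Module.Finite Λ (LinearMap.ker f))⟩
      let KB : FGMod Λ := ⟨ModuleCat.of Λ (LinearMap.ker g),
        inferInstanceAs (Module.Finite Λ (LinearMap.ker g))⟩
      let h : ((Fin n → Λ) × (Fin m → Λ)) →ₗ[Λ] C.1 := e.symm.toLinearMap ∘ₗ (f.prodMap g)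
      have hh : Function.Surjective h :=
        e.symm.surjective.comp (Function.Surjective.prodMap hf hg)
      let KC : FGMod Λ := ⟨ModuleCat.of Λ (LinearMap.ker h),
        inferInstanceAs (Module.Finite Λ (LinearMap.ker h))⟩
      have hk : LinearMap.ker h = (LinearMap.ker f).prod (LinearMap.ker g) := by
        ext ⟨a, b⟩; simp [h]
      rw [classOf_kerFree A f hf KA (LinearEquiv.refl Λ _),
        classOf_kerFree B g hg KB (LinearEquiv.refl Λ _),
        classOf_kerFree C h hh KC (LinearEquiv.refl Λ _),
        classOf_prod KA KB KC
          ⟨(LinearEquiv.ofEq _ _ hk).trans (prodSubEquiv _ _)⟩]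
      abel
    · simp only [SetLike.mem_coe, AddMonoidHom.mem_ker, FreeAbelianGroup.lift_apply_of]
      have := P.2
      let Z : FGMod Λ := ⟨ModuleCat.of Λ (LinearMap.ker (LinearMap.id (R := Λ) (M := P.1))),
        inferInstanceAs (Module.Finite Λ (LinearMap.ker _))⟩
      rw [classOf_kerFree P LinearMap.id Function.surjective_id Z (LinearEquiv.refl Λ _)]
      refine classOf_projective Z ?_
      have : Subsingleton (LinearMap.ker (LinearMap.id (R := Λ) (M := P.1))) := by
        rw [LinearMap.ker_id]; infer_instance
      exact inferInstanceAs (Module.Projective Λ (LinearMap.ker (LinearMap.id (R := Λ) (M := P.1))))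

omit [IsNoetherianRing Λ] in
lemma sup_ker_eq_top_iff {P M : Type} [AddCommGroup P] [Module Λ P] [AddCommGroup M] [Module Λ M]
    {f : P →ₗ[Λ] M} (hf : Function.Surjective f) (N : Submodule Λ P) :
    N ⊔ LinearMap.ker f = ⊤ ↔ N.map f = ⊤ := by
  rw [← Submodule.comap_map_eq]
  constructor
  · intro h
    rw [← Submodule.map_comap_eq_of_surjective hf (N.map f), h, Submodule.map_top,
      LinearMap.range_eq_top.2 hf]
  · intro h
    rw [h, Submodule.comap_top]

omit [IsNoetherianRing Λ] in
lemma finite_of_isProjCover {P M : ModuleCat.{0} Λ} {f : P →ₗ[Λ] M} (h : IsProjCover Λ f)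
    [hM : Module.Finite Λ M] : Module.Finite Λ P := by
  obtain ⟨-, hs, hk⟩ := h
  obtain ⟨n, s, hs'⟩ := Module.Finite.exists_fin (R := Λ) (M := M)
  choose g hg using hs
  have : Submodule.span Λ (Set.range fun i => g (s i)) = ⊤ := by
    apply hk
    rw [sup_ker_eq_top_iff (fun b => ⟨g b, hg b⟩), Submodule.map_span, ← Set.range_comp]
    simpa [Function.comp_def, hg] using hs'
  exact ⟨this ▸ Submodule.fg_span (Set.finite_range _)⟩

lemma IsSyzygy.finite {Y M : ModuleCat.{0} Λ} (h : IsSyzygy Λ Y M) (hM : Module.Finite Λ M) :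
    Module.Finite Λ Y := by
  obtain ⟨P, f, hf, ⟨e⟩⟩ := h
  have := finite_of_isProjCover hf
  exact Module.Finite.equiv e.symm

lemma IsSyzygy.classOf_eq {Y M : FGMod Λ} (h : IsSyzygy Λ Y.1 M.1) :
    syzMap Λ (classOf Λ M) = classOf Λ Y := by
  obtain ⟨P, f, hf, ⟨e⟩⟩ := h
  have := M.2
  have := finite_of_isProjCover hf
  have := hf.1
  have h1 : syzMap Λ (classOf Λ M) = classOf Λ (kerFree M) :=
    FreeAbelianGroup.lift_apply_of (fun M => classOf Λ (kerFree M)) M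
  rw [h1]
  exact classOf_kerFree M f hf.2.1 Y e

omit [IsNoetherianRing Λ] in
/-- `IsNthSyzygy` peels off the first syzygy; equivalently the last one may be peeled off. -/
lemma isNthSyzygy_succ_iff {t : ℕ} {Y X : ModuleCat.{0} Λ} :
    IsNthSyzygy Λ (t + 1) Y X ↔ ∃ Z, IsNthSyzygy Λ t Z X ∧ IsSyzygy Λ Y Z := by
  induction t generalizing X with
  | zero =>
    constructor
    · rintro ⟨Z, ⟨P, f, hf, ⟨e⟩⟩, ⟨e'⟩⟩
      exact ⟨X, ⟨LinearEquiv.refl Λ X⟩, P, f, hf, ⟨e'.trans e⟩⟩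
    · rintro ⟨Z, ⟨e⟩, P, f, ⟨h1, h2, h3⟩, ⟨e'⟩⟩
      have hk : LinearMap.ker (e.toLinearMap ∘ₗ f) = LinearMap.ker f := by
        rw [LinearMap.ker_comp, LinearEquiv.ker, Submodule.comap_bot]
      refine ⟨Y, ⟨P, e.toLinearMap ∘ₗ f, ⟨h1, e.surjective.comp h2, ?_⟩, ?_⟩,
        ⟨LinearEquiv.refl Λ Y⟩⟩
      · rw [hk]; exact h3
      · rw [hk]; exact ⟨e'⟩
  | succ t ih =>
    constructor
    · rintro ⟨W, hW, h⟩
      obtain ⟨Z, hZ, hY⟩ := ih.1 h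
      exact ⟨Z, ⟨W, hW, hZ⟩, hY⟩
    · rintro ⟨Z, ⟨W, hW, hZ⟩, hY⟩
      exact ⟨W, hW, ih.2 ⟨Z, hZ, hY⟩⟩

omit [IsNoetherianRing Λ] in
lemma IsNthSyzygy.trans {s t : ℕ} {X Y Z : ModuleCat.{0} Λ} (h : IsNthSyzygy Λ t Y X)
    (h' : IsNthSyzygy Λ s Z Y) : IsNthSyzygy Λ (t + s) Z X := by
  induction s generalizing Z with
  | zero =>
    obtain ⟨e⟩ := h'
    cases t with
    | zero => exact ⟨e.trans h.some⟩
    | succ t =>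
      obtain ⟨W, hW, P, f, hf, ⟨e'⟩⟩ := isNthSyzygy_succ_iff.1 h
      exact isNthSyzygy_succ_iff.2 ⟨W, hW, P, f, hf, ⟨e.trans e'⟩⟩
  | succ s ih =>
    obtain ⟨W, hW, hZ⟩ := isNthSyzygy_succ_iff.1 h'
    exact isNthSyzygy_succ_iff.2 ⟨W, ih hW, hZ⟩

lemma IsNthSyzygy.finite {t : ℕ} {Y X : ModuleCat.{0} Λ} (h : IsNthSyzygy Λ t Y X)
    (hX : Module.Finite Λ X) : Module.Finite Λ Y := by
  induction t generalizing Y with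
  | zero => obtain ⟨e⟩ := h; exact Module.Finite.equiv e.symm
  | succ t ih =>
    obtain ⟨Z, hZ, hY⟩ := isNthSyzygy_succ_iff.1 h
    exact hY.finite (ih hZ)

omit [IsNoetherianRing Λ] in
lemma IsSummand.finite {X M : ModuleCat.{0} Λ} (h : IsSummand Λ X M) (hM : Module.Finite Λ M) :
    Module.Finite Λ X := by
  obtain ⟨N, N', hc, ⟨e⟩⟩ := h
  have : Module.Finite Λ N :=
    Module.Finite.of_surjective (Submodule.projectionOnto N N' hc)
      (Submodule.projectionOnto_surjective hc)
  exact Module.Finite.equiv e.symm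

/-- `L^(t+1) ⟨add M⟩` lies in the image of `L^t ⟨add M⟩` under `L`, which is why the ranks
decrease. -/
lemma addGens_succ_subset (M : FGMod Λ) (t : ℕ) :
    addGens Λ M.1 (t + 1) ⊆ syzMap Λ '' addGens Λ M.1 t := by
  rintro _ ⟨X, hX, hXM, Y, hY, rfl⟩
  obtain ⟨Z, hZ, hYZ⟩ := isNthSyzygy_succ_iff.1 hY
  exact ⟨classOf Λ ⟨Z, hZ.finite (hXM.finite M.2)⟩,
    ⟨X, hX, hXM, ⟨Z, hZ.finite (hXM.finite M.2)⟩, hZ, rfl⟩, IsSyzygy.classOf_eq hYZ⟩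

omit [IsNoetherianRing Λ] in
lemma rank_closure_mono {A B : AddSubgroup (K0 Λ)} (h : A ≤ B) :
    Module.rank ℤ A ≤ Module.rank ℤ B :=
  LinearMap.rank_le_of_injective (AddSubgroup.inclusion h).toIntLinearMap
    (AddSubgroup.inclusion_injective h)

lemma syzygyRank_succ_le (M : FGMod Λ) (t : ℕ) :
    syzygyRank Λ M.1 (t + 1) ≤ syzygyRank Λ M.1 t := by
  have h : AddSubgroup.closure (addGens Λ M.1 (t + 1)) ≤
      (AddSubgroup.closure (addGens Λ M.1 t)).map (syzMap Λ) := by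
    rw [AddMonoidHom.map_closure]
    exact AddSubgroup.closure_mono (addGens_succ_subset M t)
  refine (rank_closure_mono h).trans ?_
  exact LinearMap.rank_le_of_surjective
    ((syzMap Λ).addSubgroupMap (AddSubgroup.closure (addGens Λ M.1 t))).toIntLinearMap
    ((syzMap Λ).addSubgroupMap_surjective _)

lemma syzygyRank_antitone (M : FGMod Λ) : Antitone (syzygyRank Λ M.1) :=
  antitone_nat_of_succ_le (syzygyRank_succ_le M)

/-- If every `t`-th syzygy of an indecomposable finitely generated module is either projective
or `Ω`-periodic with period `k`, then `φ ≤ t`: the group `L^t ⟨add M⟩` is contained in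
`L^{t+kj} ⟨add M⟩` for all `j`, so the ranks cannot drop any more. -/
lemma phi_le_of_periodic (M : FGMod Λ) (t k : ℕ) (hk : 1 ≤ k)
    (h : ∀ X Y : ModuleCat.{0} Λ, Module.Finite Λ X → Indec Λ X → IsNthSyzygy Λ t Y X →
      Module.Projective Λ Y ∨ IsNthSyzygy Λ k Y Y) : phi Λ M.1 ≤ t := by
  refine Nat.sInf_le fun j hj => le_antisymm (syzygyRank_antitone M (by omega)) ?_
  refine le_trans ?_ (syzygyRank_antitone M (show t + j ≤ t + k * j by
    have := Nat.le_mul_of_pos_left j hk; omega))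
  apply rank_closure_mono
  rw [AddSubgroup.closure_le]
  rintro _ ⟨X, hX, hXM, Y, hY, rfl⟩
  rcases h X Y.1 (hXM.finite M.2) hX hY with hp | hp
  · rw [classOf_projective Y hp]
    exact zero_mem _
  · refine AddSubgroup.subset_closure ⟨X, hX, hXM, Y, hY.trans ?_, rfl⟩
    clear hY hj
    induction j with
    | zero => exact ⟨LinearEquiv.refl Λ _⟩
    | succ j ih => exact ih.trans hp

end SyzygyMap

/-! ### Uniserial modules and projective covers -/

section Uniserial

variable {Λ : Type} [Ring Λ]

lemma IsUniserial.indec {M : ModuleCat.{0} Λ} (h : IsUniserial Λ M) (hM : Nontrivial M) :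
    Indec Λ M := by
  refine ⟨hM, fun N N' hc => ?_⟩
  rcases h N N' with h1 | h1
  · exact Or.inl (le_bot_iff.1 (hc.disjoint le_rfl h1))
  · exact Or.inr (le_bot_iff.1 (hc.disjoint h1 le_rfl))

lemma IsUniserial.equiv {M M' : ModuleCat.{0} Λ} (h : IsUniserial Λ M) (e : M ≃ₗ[Λ] M') :
    IsUniserial Λ M' := by
  intro N₁ N₂
  have key : ∀ A B : Submodule Λ M', A.comap e.toLinearMap ≤ B.comap e.toLinearMap → A ≤ B := by
    intro A B hAB x hx
    have : e.symm x ∈ A.comap e.toLinearMap := by simpa using hx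
    simpa using hAB this
  exact (h (N₁.comap e.toLinearMap) (N₂.comap e.toLinearMap)).imp (key _ _) (key _ _)

lemma IsUniserial.sub {M : ModuleCat.{0} Λ} (h : IsUniserial Λ M) (N : Submodule Λ M) :
    IsUniserial Λ (ModuleCat.of Λ N) := by
  intro N₁ N₂
  have key : ∀ A B : Submodule Λ N, A.map N.subtype ≤ B.map N.subtype → A ≤ B := fun A B hAB =>
    (Submodule.map_le_map_iff_of_injective N.injective_subtype A B).1 hAB
  exact (h (N₁.map N.subtype) (N₂.map N.subtype)).imp (key _ _) (key _ _)

lemma IsUniserial.quot {M M' : ModuleCat.{0} Λ} (h : IsUniserial Λ M) (f : M →ₗ[Λ] M')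
    (hf : Function.Surjective f) : IsUniserial Λ M' := by
  intro N₁ N₂
  exact (h (N₁.comap f) (N₂.comap f)).imp (Submodule.comap_le_comap_iff_of_surjective hf).1
    (Submodule.comap_le_comap_iff_of_surjective hf).1

/-- In a uniserial module, the kernel of a map onto a simple module contains every
proper submodule. -/
lemma IsUniserial.le_ker {M : ModuleCat.{0} Λ} (h : IsUniserial Λ M) {T : Type} [AddCommGroup T]
    [Module Λ T] [IsSimpleModule Λ T] {f : M →ₗ[Λ] T} (hf : Function.Surjective f)
    {N : Submodule Λ M} (hN : N ≠ ⊤) : N ≤ LinearMap.ker f := by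
  rcases h N (LinearMap.ker f) with h1 | h1
  · exact h1
  · have hc := LinearMap.isCoatom_ker_of_surjective hf
    rcases eq_or_lt_of_le h1 with h2 | h2
    · exact h2.ge
    · exact absurd (hc.2 N h2) hN

lemma ker_ne_top {M : Type} [AddCommGroup M] [Module Λ M] {T : Type} [AddCommGroup T]
    [Module Λ T] [IsSimpleModule Λ T] {f : M →ₗ[Λ] T} (hf : Function.Surjective f) :
    LinearMap.ker f ≠ ⊤ := (LinearMap.isCoatom_ker_of_surjective hf).1

lemma IsUniserial.radical_eq {M : ModuleCat.{0} Λ} (h : IsUniserial Λ M) {T : Type}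
    [AddCommGroup T] [Module Λ T] [IsSimpleModule Λ T] {f : M →ₗ[Λ] T}
    (hf : Function.Surjective f) : radical Λ M = LinearMap.ker f :=
  le_antisymm (sSup_le fun _ hN => h.le_ker hf hN) (le_sSup (ker_ne_top hf))

lemma IsUniserial.topIso_iff {M T : ModuleCat.{0} Λ} (h : IsUniserial Λ M)
    (hT : IsSimpleModule Λ T) :
    TopIso Λ M T ↔ ∃ f : M →ₗ[Λ] T, Function.Surjective f := by
  constructor
  · rintro ⟨e⟩
    exact ⟨e.toLinearMap ∘ₗ (radical Λ M).mkQ,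
      e.surjective.comp (Submodule.mkQ_surjective _)⟩
  · rintro ⟨f, hf⟩
    exact ⟨(Submodule.quotEquivOfEq _ _ (h.radical_eq hf)).trans
      (f.quotKerEquivOfSurjective hf)⟩

/-- A projective cover of a simple module: its kernel contains every proper submodule. -/
lemma IsProjCover.le_ker {P T : ModuleCat.{0} Λ} {f : P →ₗ[Λ] T} (h : IsProjCover Λ f)
    (hT : IsSimpleModule Λ T) {N : Submodule Λ P} (hN : N ≠ ⊤) : N ≤ LinearMap.ker f := by
  by_contra hc
  have hk := LinearMap.isCoatom_ker_of_surjective h.2.1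
  exact hN (h.2.2 N (hk.2 _ (lt_of_le_of_ne le_sup_right
    (fun he => hc (he ▸ le_sup_left)))))

lemma IsProjCover.indec {P T : ModuleCat.{0} Λ} {f : P →ₗ[Λ] T} (h : IsProjCover Λ f)
    (hT : IsSimpleModule Λ T) : Indec Λ P := by
  have hk : LinearMap.ker f ≠ ⊤ := ker_ne_top h.2.1
  refine ⟨?_, fun N N' hc => ?_⟩
  · have := IsSimpleModule.nontrivial Λ T
    exact h.2.1.nontrivial
  · by_cases h1 : N = ⊤
    · right; simpa [h1] using hc.inf_eq_bot
    · by_cases h2 : N' = ⊤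
      · left; simpa [h2] using hc.inf_eq_bot
      · exact absurd (top_le_iff.1 (hc.sup_eq_top ▸ sup_le (h.le_ker hT h1) (h.le_ker hT h2))) hk

/-- A projective module mapping onto a simple module `T` maps onto every uniserial module
with top `T`. -/
lemma exists_surjective_of_top {Q M : ModuleCat.{0} Λ} {T : Type} [AddCommGroup T] [Module Λ T]
    [IsSimpleModule Λ T] (hQ : Module.Projective Λ Q) {q : Q →ₗ[Λ] T}
    (hq : Function.Surjective q) (hM : IsUniserial Λ M) {f : M →ₗ[Λ] T}
    (hf : Function.Surjective f) : ∃ g : Q →ₗ[Λ] M, Function.Surjective g ∧ f ∘ₗ g = q := by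
  obtain ⟨g, hg⟩ := Module.projective_lifting_property f q hf
  refine ⟨g, ?_, hg⟩
  rw [← LinearMap.range_eq_top]
  by_contra hc
  have h1 := hM.le_ker hf hc
  have : q = 0 := by
    rw [← hg]; ext x; exact h1 ⟨x, rfl⟩
  have := IsSimpleModule.nontrivial Λ T
  obtain ⟨y, hy⟩ := exists_ne (0 : T)
  obtain ⟨x, rfl⟩ := hq y
  simp_all

lemma IsSyzygy.projective {Y M : ModuleCat.{0} Λ} (h : IsSyzygy Λ Y M)
    (hM : Module.Projective Λ M) : Module.Projective Λ Y := by
  obtain ⟨P, f, ⟨h1, h2, h3⟩, ⟨e⟩⟩ := h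
  obtain ⟨s, hs⟩ := Module.projective_lifting_property f LinearMap.id h2
  have : LinearMap.range s = ⊤ := by
    apply h3
    rw [sup_ker_eq_top_iff h2, ← LinearMap.range_comp, hs, LinearMap.range_id]
  have hk : ∀ x : LinearMap.ker f, x = 0 := by
    rintro ⟨x, hx⟩
    obtain ⟨y, rfl⟩ := LinearMap.range_eq_top.1 this x
    have : y = 0 := by rw [← LinearMap.id_apply (R := Λ) y, ← hs]; exact hx
    subst this
    simp
  have : Subsingleton (LinearMap.ker f) := ⟨fun a b => by rw [hk a, hk b]⟩
  exact Module.Projective.of_equiv e.symm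

lemma IsNthSyzygy.projective {t : ℕ} {Y M : ModuleCat.{0} Λ} (h : IsNthSyzygy Λ t Y M)
    (hM : Module.Projective Λ M) : Module.Projective Λ Y := by
  induction t generalizing Y with
  | zero => obtain ⟨e⟩ := h; exact Module.Projective.of_equiv e.symm
  | succ t ih =>
    obtain ⟨Z, hZ, hY⟩ := isNthSyzygy_succ_iff.1 h
    exact hY.projective (ih hZ)

/-- A surjection from a projective uniserial module onto a nonzero module is a
projective cover. -/
lemma IsUniserial.isProjCover {P M : ModuleCat.{0} Λ} (hP : Module.Projective Λ P)
    (h : IsUniserial Λ P) (hM : Nontrivial M) {f : P →ₗ[Λ] M} (hf : Function.Surjective f) :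
    IsProjCover Λ f := by
  refine ⟨hP, hf, fun N hN => ?_⟩
  rcases h N (LinearMap.ker f) with h1 | h1
  · exfalso
    rw [sup_eq_right.2 h1, LinearMap.ker_eq_top] at hN
    subst hN
    obtain ⟨y, hy⟩ := exists_ne (0 : M)
    obtain ⟨x, rfl⟩ := hf y
    simp at hy
  · rwa [sup_eq_left.2 h1] at hN

lemma hasLength_iff {M : ModuleCat.{0} Λ} {n : ℕ} :
    HasLength Λ M n ↔ Module.length Λ M = n := by
  constructor
  · rintro ⟨s, h1, h2, h3⟩
    rw [← h3]; exact (Module.length_compositionSeries s h1 h2).symm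
  · intro h
    have h0 : Module.length Λ M ≠ ⊤ := by rw [h]; exact ENat.natCast_ne_top n
    obtain ⟨h1, h2⟩ := (isFiniteLength_iff_isNoetherian_isArtinian).1 (Module.length_ne_top_iff.1 h0)
    obtain ⟨s, h3, h4⟩ := exists_compositionSeries_of_isNoetherian_isArtinian Λ M
    refine ⟨s, h3, h4, ?_⟩
    have := Module.length_compositionSeries s h3 h4
    rw [h] at this
    exact_mod_cast this

end Uniserial

/-! ### Modules over a cyclic Nakayama algebra as intervals -/

section Intervals

variable {R Λ : Type} [CommRing R] [Ring Λ] [Algebra R Λ] (pres : CyclicNakayama R Λ)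

/-- `M` is the uniserial module with top `S a` and length `n`. It is pictured as the interval
`[a, a + n)` on the cycle; `n` may wind around several times. -/
structure IsIv (a : ZMod pres.N) (n : ℕ) (M : ModuleCat.{0} Λ) : Prop where
  finite : Module.Finite Λ M
  uni : IsUniserial Λ M
  top : ∃ f : M →ₗ[Λ] pres.S a, Function.Surjective f
  length : Module.length Λ M = n

/-- The interval of the syzygy: `Ω [a, a + n) = [a + n, a + c a)`. -/
def stepIv (p : ZMod pres.N × ℕ) : ZMod pres.N × ℕ := (p.1 + p.2, pres.c p.1 - p.2)

/-- The interval is nonempty and shorter than the projective with the same top. -/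
def Proper (p : ZMod pres.N × ℕ) : Prop := 0 < p.2 ∧ p.2 < pres.c p.1

variable {pres}

include pres in
lemma isArtinianRing_of_pres : IsArtinianRing Λ :=
  have := pres.artinianBase
  have := pres.finiteAlgebra
  IsArtinianRing.of_finite R Λ

include pres in
lemma isNoetherianRing_of_pres : IsNoetherianRing Λ :=
  have := isArtinianRing_of_pres (pres := pres)
  inferInstance

include pres in
lemma length_ne_top_of_pres {M : Type} [AddCommGroup M] [Module Λ M] (h : Module.Finite Λ M) :
    Module.length Λ M ≠ ⊤ :=
  have := isArtinianRing_of_pres (pres := pres)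
  Module.length_ne_top

namespace IsIv

variable {a : ZMod pres.N} {n : ℕ} {M : ModuleCat.{0} Λ}

lemma nontrivial (h : IsIv pres a n M) : Nontrivial M := by
  obtain ⟨f, hf⟩ := h.top
  have := pres.S_simple a
  have := IsSimpleModule.nontrivial Λ (pres.S a)
  exact hf.nontrivial

lemma pos (h : IsIv pres a n M) : 0 < n := by
  have := h.nontrivial
  have h1 := Module.length_pos (R := Λ) (M := M)
  rw [h.length] at h1
  exact_mod_cast h1

lemma equiv (h : IsIv pres a n M) {M' : ModuleCat.{0} Λ} (e : M ≃ₗ[Λ] M') :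
    IsIv pres a n M' := by
  obtain ⟨f, hf⟩ := h.top
  have := h.finite
  exact ⟨Module.Finite.equiv e, h.uni.equiv e,
    ⟨f ∘ₗ e.symm.toLinearMap, hf.comp e.symm.surjective⟩, by rw [← e.length_eq, h.length]⟩

lemma indec (h : IsIv pres a n M) : Indec Λ M := h.uni.indec h.nontrivial

lemma topIso (h : IsIv pres a n M) : TopIso Λ M (pres.S a) :=
  (h.uni.topIso_iff (pres.S_simple a)).2 h.top

end IsIv

lemma P_indec (a : ZMod pres.N) : Indec Λ (pres.P a) := by
  obtain ⟨f, hf⟩ := pres.P_cover a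
  exact hf.indec (pres.S_simple a)

lemma P_isIv (a : ZMod pres.N) : IsIv pres a (pres.c a) (pres.P a) := by
  obtain ⟨f, hf⟩ := pres.P_cover a
  exact ⟨pres.P_finite a, pres.nakayama _ (pres.P_finite a) (P_indec a), ⟨f, hf.2.1⟩,
    hasLength_iff.1 (pres.P_length a)⟩

/-- Every indecomposable module is an interval module. -/
lemma exists_isIv {M : ModuleCat.{0} Λ} (hf : Module.Finite Λ M) (hM : Indec Λ M) :
    ∃ a n, IsIv pres a n M := by
  have hu := pres.nakayama M hf hM
  have := hM.1
  have := isNoetherianRing_of_pres (pres := pres)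
  obtain ⟨m, hm⟩ := IsCoatomic.exists_coatom (Submodule Λ M)
  have hs : IsSimpleModule Λ (M ⧸ m) := isSimpleModule_iff_isCoatom.2 hm
  obtain ⟨a, ⟨e⟩⟩ := pres.S_complete (ModuleCat.of Λ (M ⧸ m)) hs
  obtain ⟨n, hn⟩ := ENat.ne_top_iff_exists.1 (length_ne_top_of_pres (pres := pres) hf)
  exact ⟨a, n, hf, hu, ⟨e.toLinearMap ∘ₗ m.mkQ, e.surjective.comp m.mkQ_surjective⟩, hn.symm⟩

namespace IsIv

variable {a : ZMod pres.N} {n : ℕ} {M : ModuleCat.{0} Λ}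

lemma exists_cover (h : IsIv pres a n M) :
    ∃ g : pres.P a →ₗ[Λ] M, Function.Surjective g := by
  obtain ⟨f, hf⟩ := h.top
  obtain ⟨p, hp⟩ := (P_isIv a).top
  have := pres.S_simple a
  obtain ⟨g, hg, -⟩ := exists_surjective_of_top (pres.P_projective a) hp h.uni hf
  exact ⟨g, hg⟩

lemma length_ker (h : IsIv pres a n M) {Q : ModuleCat.{0} Λ} {m : ℕ}
    (hQ : Module.length Λ Q = m) {g : Q →ₗ[Λ] M} (hg : Function.Surjective g) :
    n ≤ m ∧ Module.length Λ (LinearMap.ker g) = (m - n : ℕ) := by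
  have h1 := Module.length_eq_add_of_exact (LinearMap.ker g).subtype g
    (Submodule.injective_subtype _) hg (by
      rw [LinearMap.exact_iff]; simp)
  rw [hQ, h.length] at h1
  generalize Module.length Λ (LinearMap.ker g) = k at h1
  induction k using ENat.recTopCoe with
  | top => simp at h1
  | coe k =>
    norm_cast at h1
    constructor
    · omega
    · congr 1; omega

lemma le (h : IsIv pres a n M) : n ≤ pres.c a := by
  obtain ⟨g, hg⟩ := h.exists_cover
  exact (h.length_ker (P_isIv a).length hg).1

include pres in
/-- In a uniserial module of finite length, submodules of equal length coincide. -/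
lemma eq_of_length {Q : ModuleCat.{0} Λ} (hQ : Module.Finite Λ Q) (hu : IsUniserial Λ Q)
    {A B : Submodule Λ Q} (h : Module.length Λ A = Module.length Λ B) : A = B := by
  have := isArtinianRing_of_pres (pres := pres)
  rw [Module.length_submodule, Module.length_submodule] at h
  rcases hu A B with h1 | h1 <;> rcases eq_or_lt_of_le h1 with h2 | h2
  · exact h2
  · exact absurd h (Submodule.height_strictMono h2).ne
  · exact h2.symm
  · exact absurd h (Submodule.height_strictMono h2).ne'

lemma iso (h : IsIv pres a n M) {M' : ModuleCat.{0} Λ} (h' : IsIv pres a n M') :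
    Nonempty (M ≃ₗ[Λ] M') := by
  obtain ⟨g, hg⟩ := h.exists_cover
  obtain ⟨g', hg'⟩ := h'.exists_cover
  have hP := P_isIv (pres := pres) a
  have hk : LinearMap.ker g = LinearMap.ker g' :=
    eq_of_length (pres := pres) hP.finite hP.uni
      ((h.length_ker hP.length hg).2.trans (h'.length_ker hP.length hg').2.symm)
  exact ⟨(g.quotKerEquivOfSurjective hg).symm.trans ((Submodule.quotEquivOfEq _ _ hk).trans
    (g'.quotKerEquivOfSurjective hg'))⟩

/-- A nonzero submodule of `[a, a + n)` is an end segment. -/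
lemma sub (h : IsIv pres a n M) (N : Submodule Λ M) {k : ℕ} (hk : 0 < k)
    (hN : Module.length Λ N = k) : IsIv pres (a + (n - k : ℕ)) k (ModuleCat.of Λ N) := by
  have := isNoetherianRing_of_pres (pres := pres)
  induction n generalizing a M with
  | zero => exact absurd h.pos (lt_irrefl _)
  | succ n ih =>
    have := h.finite
    by_cases hT : N = ⊤
    · have e : M ≃ₗ[Λ] ModuleCat.of Λ N := (LinearEquiv.ofTop N hT).symm
      have h1 := h.equiv e
      have : n + 1 = k := by exact_mod_cast h1.length.symm.trans hN
      subst this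
      simpa using h1
    · obtain ⟨f, hf⟩ := h.top
      have := pres.S_simple a
      have hle := h.uni.le_ker hf hT
      have hrad := h.uni.radical_eq hf
      have hlen : Module.length Λ (LinearMap.ker f) = n := by
        have h1 := Module.length_eq_add_of_exact (LinearMap.ker f).subtype f
          (Submodule.injective_subtype _) hf (by rw [LinearMap.exact_iff]; simp)
        rw [h.length, Module.length_eq_one (R := Λ) (M := pres.S a)] at h1
        generalize Module.length Λ (LinearMap.ker f) = k at h1
        induction k using ENat.recTopCoe with
        | top => simp at h1
        | coe k => norm_cast at h1 ⊢; omega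
      have hN0 : N ≠ ⊥ := by
        rintro rfl
        rw [Module.length_bot] at hN
        exact hk.ne (by exact_mod_cast hN)
      have hR0 : radical Λ M ≠ ⊥ := by
        rw [hrad]; rintro h0
        exact hN0 (le_bot_iff.1 (h0 ▸ hle))
      have hker : LinearMap.ker f ≠ ⊥ := hrad ▸ hR0
      have hnt : Nontrivial (ModuleCat.of Λ (LinearMap.ker f)) :=
        (Submodule.nontrivial_iff_ne_bot).2 hker
      have hl := pres.layer M h.finite h.indec a h.topIso hR0
      rw [hrad] at hl
      have hrIv : IsIv pres (a + 1) n (ModuleCat.of Λ (LinearMap.ker f)) :=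
        ⟨inferInstanceAs (Module.Finite Λ (LinearMap.ker f)), h.uni.sub _,
          ((h.uni.sub _).topIso_iff (pres.S_simple _)).1 hl, hlen⟩
      let e : N ≃ₗ[Λ] N.comap (LinearMap.ker f).subtype :=
        (Submodule.comapSubtypeEquivOfLe hle).symm
      have h2 := ih hrIv (N := N.comap (LinearMap.ker f).subtype)
        (by rw [← hN]; exact e.symm.length_eq)
      have h3 : IsIv pres _ k (ModuleCat.of Λ N) := h2.equiv e.symm
      have hkn : k ≤ n := by
        have := Module.length_le_of_injective (Submodule.inclusion hle)
          (Submodule.inclusion_injective hle)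
        rw [hN, hlen] at this
        exact_mod_cast this
      have : a + ((n + 1 - k : ℕ) : ZMod pres.N) = a + 1 + ((n - k : ℕ) : ZMod pres.N) := by
        rw [Nat.succ_sub hkn]; push_cast; ring
      rw [this]; exact h3

lemma projective_iff (h : IsIv pres a n M) : Module.Projective Λ M ↔ n = pres.c a := by
  constructor
  · intro hM
    refine le_antisymm h.le ?_
    obtain ⟨f, hf⟩ := h.top
    obtain ⟨p, hp⟩ := (P_isIv a).top
    have := pres.S_simple a
    obtain ⟨g, hg, -⟩ := exists_surjective_of_top hM hf (P_isIv a).uni hp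
    exact ((P_isIv a).length_ker h.length hg).1
  · rintro rfl
    obtain ⟨e⟩ := (P_isIv a).iso h
    have := pres.P_projective a
    exact Module.Projective.of_equiv e

lemma step_of_cover (h : IsIv pres a n M) (hn : n < pres.c a) {Q : ModuleCat.{0} Λ}
    (hQ : IsIv pres a (pres.c a) Q) {g : Q →ₗ[Λ] M} (hg : Function.Surjective g) :
    IsIv pres (stepIv pres (a, n)).1 (stepIv pres (a, n)).2 (ModuleCat.of Λ (LinearMap.ker g)) := by
  have h1 := hQ.sub (LinearMap.ker g) (k := pres.c a - n) (by omega)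
    (h.length_ker hQ.length hg).2
  have : pres.c a - (pres.c a - n) = n := by omega
  rw [this] at h1
  exact h1

/-- Every syzygy of a nonprojective interval module is the next interval module. Uniqueness of
projective covers is not needed: any projective cover is an interval module of full length. -/
lemma syzygy (h : IsIv pres a n M) (hn : n < pres.c a) {Y : ModuleCat.{0} Λ}
    (hY : IsSyzygy Λ Y M) :
    IsIv pres (stepIv pres (a, n)).1 (stepIv pres (a, n)).2 Y := by
  obtain ⟨Q, g, hg, ⟨e⟩⟩ := hY
  obtain ⟨f, hf⟩ := h.top
  have := h.finite
  have hs := pres.S_simple a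
  have hfin := finite_of_isProjCover hg
  -- the composite `Q → M → S a` is again a projective cover
  have hc : IsProjCover Λ (f ∘ₗ g : Q →ₗ[Λ] pres.S a) := by
    have hfg : Function.Surjective (f ∘ₗ g : Q →ₗ[Λ] pres.S a) := by
      rw [LinearMap.coe_comp]; exact hf.comp hg.2.1
    refine ⟨hg.1, hfg, fun N hN => ?_⟩
    rw [sup_ker_eq_top_iff hfg, Submodule.map_comp] at hN
    refine hg.2.2 N ((sup_ker_eq_top_iff hg.2.1 N).2 ?_)
    by_contra hcon
    have h1 := h.uni.le_ker hf hcon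
    rw [LinearMap.le_ker_iff_map, hN] at h1
    have := IsSimpleModule.nontrivial Λ (pres.S a)
    exact top_ne_bot h1
  have hu := pres.nakayama Q hfin (hc.indec hs)
  obtain ⟨m, hm⟩ := ENat.ne_top_iff_exists.1 (length_ne_top_of_pres (pres := pres) hfin)
  have hQ : IsIv pres a m Q := ⟨hfin, hu, ⟨_, hc.2.1⟩, hm.symm⟩
  have := hQ.projective_iff.1 hg.1
  subst this
  exact (h.step_of_cover hn hQ hg.2.1).equiv e.symm

lemma exists_syzygy (h : IsIv pres a n M) : ∃ Y, IsSyzygy Λ Y M := by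
  obtain ⟨g, hg⟩ := h.exists_cover
  exact ⟨ModuleCat.of Λ (LinearMap.ker g), _, g,
    (P_isIv a).uni.isProjCover (pres.P_projective a) h.nontrivial hg, ⟨LinearEquiv.refl Λ _⟩⟩

end IsIv

/-- Dividing out a simple submodule shortens the interval by one at its end. -/
lemma IsIv.exists_pred {a : ZMod pres.N} {n : ℕ} {M : ModuleCat.{0} Λ}
    (h : IsIv pres a (n + 1) M) (hn : 0 < n) : ∃ M', IsIv pres a n M' := by
  have := isArtinianRing_of_pres (pres := pres)
  have := h.finite
  have := h.nontrivial
  have : IsAtomic (Submodule Λ M) := isAtomic_of_orderBot_wellFounded_lt wellFounded_lt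
  obtain ⟨A, hA⟩ := IsAtomic.exists_atom (Submodule Λ M)
  have hs : IsSimpleModule Λ A := isSimpleModule_iff_isAtom.2 hA
  have hl : Module.length Λ A = 1 := Module.length_eq_one Λ A
  obtain ⟨f, hf⟩ := h.top
  have := pres.S_simple a
  have hT : A ≠ ⊤ := by
    rintro rfl
    rw [Module.length_top, h.length] at hl
    norm_cast at hl
    omega
  have hle := h.uni.le_ker hf hT
  have h1 := Module.length_eq_add_of_exact A.subtype A.mkQ
      (Submodule.injective_subtype _) A.mkQ_surjective (LinearMap.exact_subtype_mkQ A)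
  refine ⟨ModuleCat.of Λ (M ⧸ A), inferInstanceAs (Module.Finite Λ (M ⧸ A)),
    h.uni.quot A.mkQ A.mkQ_surjective, ⟨A.liftQ f hle, fun s => ?_⟩, ?_⟩
  · obtain ⟨m, rfl⟩ := hf s
    exact ⟨A.mkQ m, A.liftQ_apply f m⟩
  · rw [h.length, hl] at h1
    change Module.length Λ (M ⧸ A) = n
    generalize Module.length Λ (M ⧸ A) = k at h1
    induction k using ENat.recTopCoe with
    | top => simp at h1
    | coe k => norm_cast at h1 ⊢; omega

lemma exists_isIv_of_le (a : ZMod pres.N) (n : ℕ) (h0 : 0 < n) (hn : n ≤ pres.c a) :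
    ∃ M, IsIv pres a n M := by
  induction hn using Nat.decreasingInduction with
  | self => exact ⟨_, P_isIv a⟩
  | of_succ k hk ih =>
    obtain ⟨M, hM⟩ := ih (by omega)
    exact hM.exists_pred h0

variable (pres) in
/-- `IsIv` for a state. -/
abbrev IvOf (p : ZMod pres.N × ℕ) (M : ModuleCat.{0} Λ) : Prop := IsIv pres p.1 p.2 M

/-- As long as the intervals stay proper, the `t`-th syzygy of an interval module is the
interval module of the `t`-th iterated interval. -/
lemma isNthSyzygy_iff {p : ZMod pres.N × ℕ} {M Y : ModuleCat.{0} Λ} (h : IvOf pres p M) (t : ℕ)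
    (hp : ∀ s < t, Proper pres ((stepIv pres)^[s] p)) :
    IsNthSyzygy Λ t Y M ↔ IvOf pres ((stepIv pres)^[t] p) Y := by
  induction t generalizing Y with
  | zero =>
    exact ⟨fun ⟨e⟩ => h.equiv e.symm, fun h' => h'.iso h⟩
  | succ t ih =>
    have ih' := fun Y => ih (Y := Y) fun s hs => hp s (by omega)
    rw [isNthSyzygy_succ_iff, Function.iterate_succ_apply']
    constructor
    · rintro ⟨Z, hZ, hY⟩
      exact ((ih' Z).1 hZ).syzygy (hp t (by omega)).2 hY
    · intro hY
      have hq := hp t (by omega)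
      obtain ⟨Z, hZ⟩ := exists_isIv_of_le _ _ hq.1 hq.2.le
      obtain ⟨W, P, g, hg, ⟨e⟩⟩ := hZ.exists_syzygy
      have hW := hZ.syzygy hq.2 ⟨P, g, hg, ⟨e⟩⟩
      obtain ⟨e'⟩ := IsIv.iso hY hW
      exact ⟨Z, (ih' Z).2 hZ, P, g, hg, ⟨e'.trans e⟩⟩

lemma IsNthSyzygy.split {t u : ℕ} {X Y : ModuleCat.{0} Λ} (h : IsNthSyzygy Λ (t + u) Y X) :
    ∃ Z, IsNthSyzygy Λ t Z X ∧ IsNthSyzygy Λ u Y Z := by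
  induction u generalizing Y with
  | zero => exact ⟨Y, h, ⟨LinearEquiv.refl Λ _⟩⟩
  | succ u ih =>
    obtain ⟨W, hW, hY⟩ := isNthSyzygy_succ_iff.1 h
    obtain ⟨Z, hZ, hWZ⟩ := ih hW
    exact ⟨Z, hZ, isNthSyzygy_succ_iff.2 ⟨W, hWZ, hY⟩⟩

/-- Every `t`-th syzygy of an interval module is projective, or all intervals up to the step `t`
are proper and it is the interval module of the last one. -/
lemma projective_or_isIv {p : ZMod pres.N × ℕ} {M Y : ModuleCat.{0} Λ} (h : IvOf pres p M)
    (t : ℕ) (hY : IsNthSyzygy Λ t Y M) : Module.Projective Λ Y ∨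
      (IvOf pres ((stepIv pres)^[t] p) Y ∧ ∀ s ≤ t, Proper pres ((stepIv pres)^[s] p)) := by
  by_cases hp : ∀ s ≤ t, Proper pres ((stepIv pres)^[s] p)
  · exact Or.inr ⟨(isNthSyzygy_iff h t fun s hs => hp s hs.le).1 hY, hp⟩
  · left
    push Not at hp
    classical
    obtain ⟨hst, hs⟩ := Nat.find_spec hp
    have hmin := fun u => Nat.find_min hp (m := u)
    generalize Nat.find hp = s at *
    obtain ⟨u, rfl⟩ := Nat.exists_eq_add_of_le hst
    obtain ⟨Z, hZ, hYZ⟩ := IsNthSyzygy.split hY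
    have hZ' := (isNthSyzygy_iff h s fun v hv => by
      by_contra hc
      exact hmin v hv ⟨by omega, hc⟩).1 hZ
    have h1 := hZ'.pos
    have h2 := hZ'.le
    exact hYZ.projective (hZ'.projective_iff.2
      (le_antisymm h2 (not_lt.1 fun h3 => hs ⟨h1, h3⟩)))

/-- The radical of `P a` is an interval module of length `c a - 1` with top `S (a + 1)`, hence is
a quotient of `P (a + 1)`. -/
lemma c_le (a : ZMod pres.N) : pres.c a ≤ pres.c (a + 1) + 1 := by
  have h := P_isIv (pres := pres) a
  obtain ⟨f, hf⟩ := h.top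
  have := pres.S_simple a
  have h1 : IsIv pres a 1 (pres.S a) := by
    refine ⟨inferInstance, fun N₁ N₂ => ?_, ⟨LinearMap.id, Function.surjective_id⟩,
      by rw [Module.length_eq_one Λ (pres.S a)]; rfl⟩
    rcases eq_bot_or_eq_top N₁ with h | h <;> simp [h]
  have h2 := h1.length_ker h.length hf
  have h3 := pres.two_le_c a
  have h4 := (h.sub _ (by omega) h2.2).le
  have : pres.c a - (pres.c a - 1) = 1 := by omega
  rw [this, Nat.cast_one] at h4
  omega

end Intervals

/-! ### Combinatorics of the Kupisch series and the upper bound -/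

/-- If every vertex outside the image of `k` satisfies `c v = c (v + 1) + 1`, then the vertices
`v + c v` are all attained on the image of `k`. -/
lemma exists_end_eq {N : ℕ} [NeZero N] {ι : Type} (j₀ : ι) (c : ZMod N → ℕ) (k : ι → ZMod N)
    (h : ∀ v, (¬ ∃ j, k j = v) → c v = c (v + 1) + 1) (v : ZMod N) :
    ∃ j, v + (c v : ZMod N) = k j + (c (k j) : ZMod N) := by
  obtain ⟨m, hm⟩ : ∃ m : ℕ, v + m = k j₀ := ⟨(k j₀ - v).val, by simp⟩
  induction m generalizing v with
  | zero => exact ⟨j₀, by simp at hm; rw [hm]⟩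
  | succ m ih =>
    by_cases hv : ∃ j, k j = v
    · obtain ⟨j, rfl⟩ := hv
      exact ⟨j, rfl⟩
    · obtain ⟨j, hj⟩ := ih (v + 1) (by rw [← hm]; push_cast; ring)
      refine ⟨j, hj ▸ ?_⟩
      rw [h v hv]; push_cast; ring

lemma range_iterate_succ_subset {α : Type} (f : α → α) (t : ℕ) :
    Set.range f^[t + 1] ⊆ Set.range f^[t] := by
  rintro _ ⟨x, rfl⟩
  exact ⟨f x, (Function.iterate_succ_apply f t x).symm⟩

lemma image_range_iterate {α : Type} (f : α → α) (t : ℕ) :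
    f '' Set.range f^[t] = Set.range f^[t + 1] := by
  rw [Function.iterate_succ', Set.range_comp]

/-- A self-map of a finite set whose image has at most `r` elements reaches its eventual image
after `r` steps. -/
lemma range_iterate_stable {α : Type} [Finite α] [Nonempty α] (f : α → α) {r : ℕ} (hr : 1 ≤ r)
    (h : (Set.range f).ncard ≤ r) : Set.range f^[r + 1] = Set.range f^[r] := by
  by_contra hne
  have hstep : ∀ t ≤ r, Set.range f^[t + 1] ≠ Set.range f^[t] := by
    intro t ht heq
    have : ∀ u, Set.range f^[t + u + 1] = Set.range f^[t + u] := by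
      intro u
      induction u with
      | zero => exact heq
      | succ u ih =>
        rw [← image_range_iterate, ← add_assoc, ih, image_range_iterate]
        exact ih
    obtain ⟨u, rfl⟩ := Nat.exists_eq_add_of_le ht
    exact hne (this u)
  have hlt : ∀ t ≤ r, (Set.range f^[t + 1]).ncard + t ≤ r := by
    intro t ht
    induction t with
    | zero => simpa using h
    | succ t ih =>
      have h1 := Set.ncard_lt_ncard ((range_iterate_succ_subset f (t + 1)).ssubset_of_ne
        (hstep _ ht)) (Set.toFinite _)
      have := ih (by omega)
      omega
  have h1 := hlt r le_rfl
  have h2 : 0 < (Set.range f^[r + 1]).ncard :=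
    (Set.ncard_pos (Set.toFinite _)).2 (Set.range_nonempty _)
  omega

/-- A self-map of a finite set is injective on its eventual image. -/
lemma injOn_range_iterate {α : Type} [Finite α] [Nonempty α] (f : α → α) {r : ℕ} (hr : 1 ≤ r)
    (h : (Set.range f).ncard ≤ r) : Set.InjOn f (Set.range f^[r]) := by
  have h1 := range_iterate_stable f hr h
  rw [← image_range_iterate] at h1
  exact Set.injOn_of_ncard_image_eq (by rw [h1]) (Set.toFinite _)

/-- An injective self-map of a finite set has a power which is the identity. -/
lemma exists_iterate_eq_self {α : Type} {G : Set α} (hG : G.Finite) {f : α → α}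
    (hm : Set.MapsTo f G G) (hi : Set.InjOn f G) : ∃ k, 1 ≤ k ∧ ∀ x ∈ G, f^[k] x = x := by
  have : Finite G := hG
  let g : G → G := hm.restrict f G G
  have hg : Function.Injective g := hm.restrict_inj.2 hi
  let σ : Equiv.Perm G := Equiv.ofBijective g (Finite.injective_iff_bijective.1 hg)
  refine ⟨orderOf σ, orderOf_pos σ, fun x hx => ?_⟩
  have h1 : (σ ^ orderOf σ) ⟨x, hx⟩ = ⟨x, hx⟩ := by rw [pow_orderOf_eq_one]; rfl
  rw [← Equiv.Perm.iterate_eq_pow] at h1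
  have h2 := congrArg Subtype.val h1
  have h3 : ∀ n, ((σ^[n] ⟨x, hx⟩ : G) : α) = f^[n] x := by
    intro n
    induction n with
    | zero => rfl
    | succ n ih => rw [Function.iterate_succ_apply', Function.iterate_succ_apply', ← ih]; rfl
  rw [h3] at h2
  exact h2

section Upper

variable {R Λ : Type} [CommRing R] [Ring Λ] [Algebra R Λ] (pres : CyclicNakayama R Λ)

instance : NeZero pres.N := ⟨by have := pres.three_le_N; omega⟩

/-- The vertex just behind the interval of `P v`. -/
def endOf (v : ZMod pres.N) : ZMod pres.N := v + pres.c v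

/-- The vertices in the image of `endOf^r`, which is the eventual image of `endOf`; they contain
the end points of all proper intervals obtained by `r` double syzygies. -/
def stable : Set (ZMod pres.N) := Set.range (endOf pres)^[pres.r]

/-- The proper intervals both of whose end points are stable. -/
def goodIv : Set (ZMod pres.N × ℕ) :=
  {p | Proper pres p ∧ p.1 ∈ stable pres ∧ p.1 + (p.2 : ZMod pres.N) ∈ stable pres}

variable {pres}

/-- The projectives have at most `r` end points: each is shared with the projective of the
starting vertex of a relation. -/
lemma ncard_range_endOf : (Set.range (endOf pres)).ncard ≤ pres.r := by
  have : NeZero pres.r := ⟨by have := pres.one_le_r; omega⟩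
  have hsub : Set.range (endOf pres) ⊆ Set.range fun j => endOf pres (pres.kOdd j) := by
    rintro _ ⟨v, rfl⟩
    obtain ⟨j, hj⟩ := exists_end_eq (0 : ZMod pres.r) pres.c pres.kOdd
      (fun v hv => not_not.1 fun h => hv ((pres.relation_starts v).2 h)) v
    exact ⟨j, hj.symm⟩
  refine (Set.ncard_le_ncard hsub (Set.toFinite _)).trans ?_
  rw [← Set.image_univ]
  refine (Set.ncard_image_le (Set.toFinite _)).trans ?_
  rw [Set.ncard_univ, Nat.card_zmod]

lemma endOf_injOn : Set.InjOn (endOf pres) (stable pres) :=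
  injOn_range_iterate _ pres.one_le_r ncard_range_endOf

lemma endOf_mem {v : ZMod pres.N} (hv : v ∈ stable pres) : endOf pres v ∈ stable pres := by
  unfold stable
  rw [← range_iterate_stable (endOf pres) pres.one_le_r ncard_range_endOf,
    ← image_range_iterate]
  exact ⟨v, hv, rfl⟩

lemma c_le_add (a : ZMod pres.N) (n : ℕ) : pres.c a ≤ pres.c (a + n) + n := by
  induction n with
  | zero => simp
  | succ n ih =>
    have h := c_le (pres := pres) (a + n)
    rw [add_assoc] at h
    push_cast
    omega

/-- The end point of the syzygy of `[a, a + n)` is the end point of `P a`. -/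
lemma stepIv_end {p : ZMod pres.N × ℕ} (hp : Proper pres p) :
    (stepIv pres p).1 + ((stepIv pres p).2 : ZMod pres.N) = endOf pres p.1 := by
  simp only [stepIv, endOf]
  rw [Nat.cast_sub hp.2.le]
  ring

/-- The syzygy of an interval with stable end points is again proper: if it were projective, the
map `endOf` would identify the two end points. -/
lemma goodIv_mapsTo : Set.MapsTo (stepIv pres) (goodIv pres) (goodIv pres) := by
  rintro ⟨a, n⟩ ⟨hp, ha, hn⟩
  refine ⟨⟨Nat.sub_pos_of_lt hp.2, lt_of_le_of_ne ?_ fun heq => ?_⟩, hn, ?_⟩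
  · have := c_le_add a n
    exact Nat.sub_le_iff_le_add.2 this
  · -- equality would give two stable vertices with the same image under `endOf`
    have h1 := stepIv_end hp
    rw [heq] at h1
    have h2 := endOf_injOn hn ha h1
    have h3 : (stepIv pres (a, n)).1 = a := h2
    rw [h3] at heq
    have h4 : pres.c a - n = pres.c a := heq
    have h5 : 0 < n := hp.1
    have h6 : n < pres.c a := hp.2
    omega
  · rw [stepIv_end hp]
    exact endOf_mem ha

lemma goodIv_injOn : Set.InjOn (stepIv pres) (goodIv pres) := by
  rintro ⟨a, n⟩ ⟨hp, ha, -⟩ ⟨b, m⟩ ⟨hq, hb, -⟩ h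
  have h1 := stepIv_end hp
  rw [h, stepIv_end hq] at h1
  have hab : b = a := endOf_injOn hb ha h1
  subst hab
  have h2 : pres.c b - n = pres.c b - m := congrArg Prod.snd h
  have h3 : n < pres.c b := hp.2
  have h4 : m < pres.c b := hq.2
  have : n = m := by omega
  rw [this]

lemma goodIv_finite : (goodIv pres).Finite := by
  refine (Set.finite_univ.prod (Set.finite_Iio (∑ v, pres.c v + 1))).subset ?_
  rintro ⟨a, n⟩ ⟨hp, -, -⟩
  have h1 : n < pres.c a := hp.2
  have h2 := Finset.single_le_sum (f := pres.c) (fun _ _ => Nat.zero_le _) (Finset.mem_univ a)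
  exact ⟨trivial, by simp only [Set.mem_Iio]; omega⟩

/-- A double syzygy moves both end points of an interval by `endOf`. -/
lemma stepIv_iterate_two_mul (p : ZMod pres.N × ℕ) (t : ℕ)
    (hp : ∀ s < 2 * t, Proper pres ((stepIv pres)^[s] p)) :
    ((stepIv pres)^[2 * t] p).1 = (endOf pres)^[t] p.1 ∧
      ((stepIv pres)^[2 * t] p).1 + (((stepIv pres)^[2 * t] p).2 : ZMod pres.N) =
        (endOf pres)^[t] (p.1 + p.2) := by
  induction t with
  | zero => simp
  | succ t ih =>
    obtain ⟨h1, h2⟩ := ih fun s hs => hp s (by omega)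
    have h3 := hp (2 * t) (by omega)
    have h4 := hp (2 * t + 1) (by omega)
    rw [Function.iterate_succ_apply'] at h4
    rw [show 2 * (t + 1) = 2 * t + 1 + 1 by ring, Function.iterate_succ_apply',
      Function.iterate_succ_apply', Function.iterate_succ_apply' (endOf pres),
      Function.iterate_succ_apply' (endOf pres), ← h1, ← h2]
    exact ⟨stepIv_end h3, stepIv_end h4⟩

/-- After `2r` syzygies every indecomposable module has become projective or periodic. -/
lemma exists_period : ∃ k, 1 ≤ k ∧ ∀ X Y : ModuleCat.{0} Λ, Module.Finite Λ X → Indec Λ X →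
    IsNthSyzygy Λ (2 * pres.r) Y X → Module.Projective Λ Y ∨ IsNthSyzygy Λ k Y Y := by
  obtain ⟨k, hk, hper⟩ := exists_iterate_eq_self (goodIv_finite (pres := pres)) goodIv_mapsTo
    goodIv_injOn
  refine ⟨k, hk, fun X Y hX hX' hY => ?_⟩
  obtain ⟨a, n, h⟩ := exists_isIv (pres := pres) hX hX'
  refine (projective_or_isIv (p := (a, n)) h _ hY).imp_right ?_
  rintro ⟨hY', hp⟩
  obtain ⟨h1, h2⟩ := stepIv_iterate_two_mul (a, n) pres.r fun s hs => hp s hs.le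
  have hgood : (stepIv pres)^[2 * pres.r] (a, n) ∈ goodIv pres :=
    ⟨hp _ le_rfl, h1 ▸ ⟨a, rfl⟩, h2 ▸ ⟨_, rfl⟩⟩
  refine (isNthSyzygy_iff hY' k fun s _ => (goodIv_mapsTo.iterate s hgood).1).2 ?_
  rw [hper _ hgood]
  exact hY'

lemma phi_le (M : FGMod Λ) : phi Λ M.1 ≤ 2 * pres.r := by
  have := isNoetherianRing_of_pres (pres := pres)
  obtain ⟨k, hk, h⟩ := exists_period (pres := pres)
  exact phi_le_of_periodic M _ k hk h

variable (pres) in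
lemma phiDim_le : phiDim Λ ≤ ((2 * pres.r : ℕ) : ℕ∞) :=
  iSup_le fun M => by exact_mod_cast phi_le (pres := pres) M

end Upper

/-! ### Classes of infinite order in `K₀`, and lower bounds for `φ` -/

section Stable

variable {Λ : Type} [Ring Λ]

/-- The homomorphisms `M → T` which factor through `π : F → T`. -/
def factoring {F T : Type} [AddCommGroup F] [Module Λ F] [AddCommGroup T] [Module Λ T]
    (π : F →ₗ[Λ] T) (M : Type) [AddCommGroup M] [Module Λ M] : AddSubgroup (M →ₗ[Λ] T) :=
  (AddMonoidHom.mk' (fun g : M →ₗ[Λ] F => π ∘ₗ g) fun g h => LinearMap.comp_add g h π).range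

section

variable {F T : Type} [AddCommGroup F] [Module Λ F] [AddCommGroup T] [Module Λ T]
  (π : F →ₗ[Λ] T)

lemma mem_factoring {M : Type} [AddCommGroup M] [Module Λ M] {f : M →ₗ[Λ] T} :
    f ∈ factoring π M ↔ ∃ g : M →ₗ[Λ] F, π ∘ₗ g = f := Iff.rfl

/-- The stable Hom groups are additive in the first variable. -/
lemma index_factoring_prod {A B C : Type} [AddCommGroup A] [Module Λ A] [AddCommGroup B]
    [Module Λ B] [AddCommGroup C] [Module Λ C] (e : C ≃ₗ[Λ] A × B) :
    (factoring π C).index = (factoring π A).index * (factoring π B).index := by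
  let i : A →ₗ[Λ] C := e.symm.toLinearMap ∘ₗ LinearMap.inl Λ A B
  let j : B →ₗ[Λ] C := e.symm.toLinearMap ∘ₗ LinearMap.inr Λ A B
  let Φ : (C →ₗ[Λ] T) →+ ((A →ₗ[Λ] T) ⧸ factoring π A) × ((B →ₗ[Λ] T) ⧸ factoring π B) :=
    ((QuotientAddGroup.mk' _).comp (AddMonoidHom.mk' (fun f : C →ₗ[Λ] T => f ∘ₗ i)
        fun f g => LinearMap.add_comp i g f)).prod
      ((QuotientAddGroup.mk' _).comp (AddMonoidHom.mk' (fun f : C →ₗ[Λ] T => f ∘ₗ j)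
        fun f g => LinearMap.add_comp j g f))
  have hglue : ∀ {T' : Type} [AddCommGroup T'] [Module Λ T'] (f : A →ₗ[Λ] T') (g : B →ₗ[Λ] T'),
      (f.coprod g ∘ₗ e.toLinearMap) ∘ₗ i = f ∧ (f.coprod g ∘ₗ e.toLinearMap) ∘ₗ j = g := by
    intro T' _ _ f g
    constructor <;> ext x <;> simp [i, j]
  have hext : ∀ {f g : C →ₗ[Λ] T}, f ∘ₗ i = g ∘ₗ i → f ∘ₗ j = g ∘ₗ j → f = g := by
    intro f g h1 h2
    have : f ∘ₗ e.symm.toLinearMap = g ∘ₗ e.symm.toLinearMap :=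
      LinearMap.prod_ext h1 h2
    ext x
    simpa using LinearMap.congr_fun this (e x)
  have hker : Φ.ker = factoring π C := by
    ext f
    have : Φ f = 0 ↔ f ∘ₗ i ∈ factoring π A ∧ f ∘ₗ j ∈ factoring π B := by
      rw [Prod.ext_iff]
      exact and_congr (QuotientAddGroup.eq_zero_iff _) (QuotientAddGroup.eq_zero_iff _)
    rw [AddMonoidHom.mem_ker, this]
    constructor
    · rintro ⟨⟨g, hg⟩, ⟨h, hh⟩⟩
      obtain ⟨h1, h2⟩ := hglue g h
      refine ⟨g.coprod h ∘ₗ e.toLinearMap, hext ?_ ?_⟩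
      · exact (congrArg (fun z => π ∘ₗ z) h1).trans hg
      · exact (congrArg (fun z => π ∘ₗ z) h2).trans hh
    · rintro ⟨g, rfl⟩
      exact ⟨⟨g ∘ₗ i, rfl⟩, ⟨g ∘ₗ j, rfl⟩⟩
  have hsurj : Function.Surjective Φ := by
    rintro ⟨x, y⟩
    obtain ⟨f, rfl⟩ := QuotientAddGroup.mk_surjective x
    obtain ⟨g, rfl⟩ := QuotientAddGroup.mk_surjective y
    obtain ⟨h1, h2⟩ := hglue f g
    refine ⟨f.coprod g ∘ₗ e.toLinearMap, Prod.ext ?_ ?_⟩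
    · exact congrArg (QuotientAddGroup.mk' _) h1
    · exact congrArg (QuotientAddGroup.mk' _) h2
  rw [← hker, AddSubgroup.index_ker, AddMonoidHom.range_eq_top.2 hsurj, AddSubgroup.card_top,
    Nat.card_prod]
  rfl

lemma index_factoring_projective (hπ : Function.Surjective π) {P : Type} [AddCommGroup P]
    [Module Λ P] (hP : Module.Projective Λ P) : (factoring π P).index = 1 := by
  rw [AddSubgroup.index_eq_one, eq_top_iff]
  intro f _
  exact Module.projective_lifting_property π f hπ

/-- The identity of a nonprojective module does not factor through a projective module. -/
lemma index_factoring_ne_one [Module.Projective Λ F] (hT : ¬ Module.Projective Λ T) :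
    (factoring π T).index ≠ 1 := by
  rw [Ne, AddSubgroup.index_eq_one]
  intro h
  have h1 : (LinearMap.id : T →ₗ[Λ] T) ∈ factoring π T := h ▸ AddSubgroup.mem_top _
  obtain ⟨g, hg⟩ := h1
  exact hT (Module.Projective.of_split g π hg)

end

variable [Finite Λ]

lemma index_factoring_ne_zero {F T M : Type} [AddCommGroup F] [Module Λ F] [AddCommGroup T]
    [Module Λ T] (π : F →ₗ[Λ] T) [AddCommGroup M] [Module Λ M] (hM : Module.Finite Λ M)
    (hT : Module.Finite Λ T) : (factoring π M).index ≠ 0 := by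
  have : Finite M := Module.finite_of_finite Λ
  have : Finite T := Module.finite_of_finite Λ
  have : Finite (M →ₗ[Λ] T) := DFunLike.finite _
  exact AddSubgroup.index_ne_zero_of_finite

/-- Over a finite ring the class of a nonprojective module has infinite order in `K₀`: the
logarithm of the order of the stable Hom group into `T` defines a homomorphism `K₀ → ℝ` which
does not vanish at `T`. -/
lemma classOf_nontorsion (T : FGMod Λ) (hT : ¬ Module.Projective Λ T.1) (m : ℤ)
    (hm : m • classOf Λ T = 0) : m = 0 := by
  have := T.2
  obtain ⟨n, π, hπ⟩ := Module.Finite.exists_fin' Λ T.1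
  let φ₀ : FreeAbelianGroup (FGMod Λ) →+ ℝ :=
    FreeAbelianGroup.lift fun M => Real.log ((factoring π M.1).index : ℝ)
  have hφ₀ : ∀ M, φ₀ (FreeAbelianGroup.of M) = Real.log ((factoring π M.1).index : ℝ) :=
    fun M => FreeAbelianGroup.lift_apply_of _ _
  have hle : K0Rel Λ ≤ φ₀.ker := by
    refine (AddSubgroup.closure_le _).2 ?_
    rintro _ (⟨A, B, C, ⟨e⟩, rfl⟩ | ⟨P, hP, rfl⟩)
    · have hA : ((factoring π A.1).index : ℝ) ≠ 0 :=
        Nat.cast_ne_zero.2 (index_factoring_ne_zero π A.2 T.2)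
      have hB : ((factoring π B.1).index : ℝ) ≠ 0 :=
        Nat.cast_ne_zero.2 (index_factoring_ne_zero π B.2 T.2)
      simp only [SetLike.mem_coe, AddMonoidHom.mem_ker, map_sub, hφ₀,
        index_factoring_prod π e, Nat.cast_mul, Real.log_mul hA hB]
      ring
    · simp only [SetLike.mem_coe, AddMonoidHom.mem_ker, hφ₀,
        index_factoring_projective π hπ hP, Nat.cast_one, Real.log_one]
  let φ : K0 Λ →+ ℝ := QuotientAddGroup.lift (K0Rel Λ) φ₀ hle
  have h1 : φ (classOf Λ T) = Real.log ((factoring π T.1).index : ℝ) := hφ₀ T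
  have h2 : φ (m • classOf Λ T) = 0 := by rw [hm, map_zero]
  rw [map_zsmul, h1, zsmul_eq_mul, mul_eq_zero] at h2
  have h3 := index_factoring_ne_zero π T.2 T.2
  have h4 := index_factoring_ne_one π hT
  have h5 : Real.log ((factoring π T.1).index : ℝ) ≠ 0 :=
    (Real.log_pos (by exact_mod_cast (by omega : 1 < (factoring π T.1).index))).ne'
  exact_mod_cast h2.resolve_right h5

omit [Finite Λ] in
lemma Indec.iso_of_isSummand {X X' : ModuleCat.{0} Λ} (hX : Indec Λ X) (hX' : Indec Λ X')
    (h : IsSummand Λ X' X) : Nonempty (X' ≃ₗ[Λ] X) := by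
  obtain ⟨N, N', hc, ⟨e⟩⟩ := h
  have hN : N ≠ ⊥ := by
    rintro rfl
    have := hX'.1
    have := e.symm.surjective.nontrivial
    exact not_subsingleton (⊥ : Submodule Λ X) inferInstance
  have hN' : N' = ⊥ := (hX.2 N N' hc).resolve_left hN
  subst hN'
  exact ⟨e.trans (LinearEquiv.ofTop N (by simpa using hc.sup_eq_top))⟩

/-- If the syzygies of the indecomposable module `X` are nonprojective before the step `t₀` and
projective at the step `t₀`, then `φ X ≥ t₀`. -/
lemma le_phi [IsNoetherianRing Λ] (X : FGMod Λ) (hX : Indec Λ X.1) (t₀ : ℕ)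
    (h₀ : ∀ Y, IsNthSyzygy Λ t₀ Y X.1 → Module.Projective Λ Y)
    (h : ∀ t < t₀, ∃ Y, IsNthSyzygy Λ t Y X.1 ∧ ¬ Module.Projective Λ Y) :
    t₀ ≤ phi Λ X.1 := by
  have hz : syzygyRank Λ X.1 t₀ = 0 := by
    have : AddSubgroup.closure (addGens Λ X.1 t₀) = ⊥ := by
      rw [AddSubgroup.closure_eq_bot_iff]
      rintro _ ⟨X', hX', hs, Y, hY, rfl⟩
      obtain ⟨e⟩ := hX.iso_of_isSummand hX' hs
      refine classOf_projective Y (h₀ _ ?_)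
      have h1 : IsNthSyzygy Λ 0 X' X.1 := ⟨e⟩
      simpa using h1.trans hY
    unfold syzygyRank
    rw [this]
    exact rank_subsingleton' _ _
  have hnz : ∀ t < t₀, syzygyRank Λ X.1 t ≠ 0 := by
    intro t ht hr
    obtain ⟨Y, hY, hYp⟩ := h t ht
    let Y' : FGMod Λ := ⟨Y, hY.finite X.2⟩
    have hmem : classOf Λ Y' ∈ AddSubgroup.closure (addGens Λ X.1 t) :=
      AddSubgroup.subset_closure ⟨X.1, hX,
        ⟨⊤, ⊥, isCompl_top_bot, ⟨(LinearEquiv.ofTop ⊤ rfl).symm⟩⟩, Y', hY, rfl⟩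
    obtain ⟨m, hm, h0⟩ := rank_eq_zero_iff.1 hr ⟨_, hmem⟩
    exact hm (classOf_nontorsion Y' hYp m (congrArg Subtype.val h0))
  refine le_csInf ⟨t₀, fun j _ => ?_⟩ fun t ht => ?_
  · exact le_antisymm (syzygyRank_antitone X (by omega)) (hz ▸ zero_le)
  · by_contra hlt
    push Not at hlt
    have h1 := ht (t₀ - t) (by omega)
    rw [show t + (t₀ - t) = t₀ by omega, hz] at h1
    exact hnz t hlt h1.symm

end Stable

/-! ### The Kupisch series attaining the bound -/

/-- The Kupisch series `(2N - 1, 2N + 1, …, 2N + 1, 2N)`. -/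
def sharpC (N : ℕ) (v : ZMod N) : ℕ :=
  if v = 0 then 2 * N - 1 else if v = -1 then 2 * N else 2 * N + 1

section Sharp

variable {R Λ : Type} [CommRing R] [Ring Λ] [Algebra R Λ] {pres : CyclicNakayama R Λ}

lemma neg_one_ne_zero_pres : (-1 : ZMod pres.N) ≠ 0 := by
  have := pres.three_le_N
  have : Fact (1 < pres.N) := ⟨by omega⟩
  exact neg_ne_zero.2 one_ne_zero

lemma natCast_ne {N t : ℕ} (h1 : 0 < t) (h2 : t + 1 < N) :
    (t : ZMod N) ≠ 0 ∧ (t : ZMod N) ≠ -1 := by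
  constructor
  · intro h
    rw [ZMod.natCast_eq_zero_iff] at h
    exact absurd (Nat.le_of_dvd h1 h) (by omega)
  · intro h
    have h3 : ((t + 1 : ℕ) : ZMod N) = 0 := by push_cast; rw [h]; ring
    rw [ZMod.natCast_eq_zero_iff] at h3
    exact absurd (Nat.le_of_dvd (by omega) h3) (by omega)

variable (hc : ∀ v, pres.c v = sharpC pres.N v)
include hc

lemma sharp_c_zero : pres.c 0 = 2 * pres.N - 1 := by rw [hc]; simp [sharpC]

lemma sharp_c_neg_one : pres.c (-1) = 2 * pres.N := by
  rw [hc, sharpC, if_neg neg_one_ne_zero_pres, if_pos rfl]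

lemma sharp_c_mid {t : ℕ} (h1 : 0 < t) (h2 : t + 1 < pres.N) :
    pres.c t = 2 * pres.N + 1 := by
  rw [hc, sharpC, if_neg (natCast_ne h1 h2).1, if_neg (natCast_ne h1 h2).2]

/-- The interval `[-1, -1 + N)` is its own syzygy. -/
lemma sharp_infinite : HasInfiniteGlobalDim Λ := by
  rintro ⟨n, hn⟩
  have h3 := pres.three_le_N
  have hcn := sharp_c_neg_one hc
  obtain ⟨M, hM⟩ := exists_isIv_of_le (pres := pres) (-1) pres.N (by omega) (by omega)
  obtain ⟨Y, hY, hYp⟩ := hn M hM.finite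
  have hfix : stepIv pres (-1, pres.N) = (-1, pres.N) := by
    refine Prod.ext (by simp [stepIv]) ?_
    change pres.c (-1) - pres.N = pres.N
    omega
  have hit : ∀ s, (stepIv pres)^[s] (-1, pres.N) = (-1, pres.N) := fun s =>
    Function.iterate_fixed hfix s
  have hprop : Proper pres (-1, pres.N) :=
    ⟨by simp only; omega, by change pres.N < pres.c (-1); omega⟩
  have h1 := (isNthSyzygy_iff (p := (-1, pres.N)) hM n fun s _ => (hit s).symm ▸ hprop).1 hY
  rw [hit] at h1
  have h2 : pres.N = pres.c (-1) := h1.projective_iff.1 hYp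
  omega

variable (hr : pres.N = pres.r + 2)
include hr

/-- The syzygies of `[0, N + 1)`: the intervals of even step start at `-1` and grow by one each
time, until after `2r` steps they reach the projective `P (-1)`. -/
lemma sharp_iterate (t : ℕ) (ht : t < pres.r) :
    (stepIv pres)^[2 * t + 1] (0, pres.N + 1) = (((t + 1 : ℕ) : ZMod pres.N), pres.N - t - 2) ∧
      (stepIv pres)^[2 * t + 2] (0, pres.N + 1) = (-1, pres.N + t + 3) := by
  have hstep : ∀ t < pres.r,
      stepIv pres (((t + 1 : ℕ) : ZMod pres.N), pres.N - t - 2) = (-1, pres.N + t + 3) := by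
    intro t ht
    refine Prod.ext ?_ ?_
    · change ((t + 1 : ℕ) : ZMod pres.N) + ((pres.N - t - 2 : ℕ) : ZMod pres.N) = -1
      have : ((t + 1 + (pres.N - t - 2) + 1 : ℕ) : ZMod pres.N) = 0 := by
        rw [show t + 1 + (pres.N - t - 2) + 1 = pres.N by omega, ZMod.natCast_self]
      rw [Nat.cast_add, Nat.cast_add, Nat.cast_one] at this
      exact eq_neg_of_add_eq_zero_left this
    · change pres.c ((t + 1 : ℕ) : ZMod pres.N) - (pres.N - t - 2) = pres.N + t + 3
      rw [sharp_c_mid hc (by omega) (by omega)]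
      omega
  induction t with
  | zero =>
    have h1 : (stepIv pres)^[2 * 0 + 1] (0, pres.N + 1) =
        (((0 + 1 : ℕ) : ZMod pres.N), pres.N - 0 - 2) := by
      refine Prod.ext (by simp [stepIv]) ?_
      change pres.c 0 - (pres.N + 1) = pres.N - 0 - 2
      rw [sharp_c_zero hc]
      omega
    refine ⟨h1, ?_⟩
    rw [Function.iterate_succ_apply', h1]
    exact hstep 0 ht
  | succ t ih =>
    have h1 : (stepIv pres)^[2 * (t + 1) + 1] (0, pres.N + 1) =
        (((t + 1 + 1 : ℕ) : ZMod pres.N), pres.N - (t + 1) - 2) := by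
      rw [Function.iterate_succ_apply', show 2 * (t + 1) = 2 * t + 2 by ring,
        (ih (by omega)).2]
      refine Prod.ext ?_ ?_
      · change (-1 : ZMod pres.N) + ((pres.N + t + 3 : ℕ) : ZMod pres.N) = _
        push_cast
        rw [ZMod.natCast_self]
        ring
      · change pres.c (-1) - (pres.N + t + 3) = _
        rw [sharp_c_neg_one hc]
        simp only
        omega
    refine ⟨h1, ?_⟩
    rw [show 2 * (t + 1) + 2 = 2 * (t + 1) + 1 + 1 by ring, Function.iterate_succ_apply', h1]
    exact hstep _ ht

lemma sharp_proper (s : ℕ) (hs : s < 2 * pres.r) :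
    Proper pres ((stepIv pres)^[s] (0, pres.N + 1)) := by
  rcases Nat.even_or_odd' s with ⟨t, rfl | rfl⟩
  · rcases t with _ | t
    · have := sharp_c_zero hc
      have := pres.three_le_N
      exact ⟨Nat.succ_pos _, by change pres.N + 1 < pres.c 0; omega⟩
    · rw [show 2 * (t + 1) = 2 * t + 2 by ring, (sharp_iterate hc hr t (by omega)).2]
      have := sharp_c_neg_one hc
      exact ⟨Nat.succ_pos _, by change pres.N + t + 3 < pres.c (-1); omega⟩
  · rw [(sharp_iterate hc hr t (by omega)).1]
    have h := sharp_c_mid hc (t := t + 1) (by omega) (by omega)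
    exact ⟨by change 0 < pres.N - t - 2; omega,
      by change pres.N - t - 2 < pres.c ((t + 1 : ℕ) : ZMod pres.N); omega⟩

/-- The indecomposable module of length `N + 1` with top `S 0` has `φ = 2r`. -/
lemma sharp_phiDim [Finite Λ] : phiDim Λ = ((2 * pres.r : ℕ) : ℕ∞) := by
  have := isNoetherianRing_of_pres (pres := pres)
  refine le_antisymm (phiDim_le pres) ?_
  have hr1 := pres.one_le_r
  have h0 := sharp_proper hc hr 0 (by omega)
  obtain ⟨X, hX⟩ := exists_isIv_of_le (pres := pres) 0 (pres.N + 1) h0.1 h0.2.le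
  have hlast : (stepIv pres)^[2 * pres.r] (0, pres.N + 1) = (-1, 2 * pres.N) := by
    have h1 := (sharp_iterate hc hr (pres.r - 1) (by omega)).2
    rw [show 2 * (pres.r - 1) + 2 = 2 * pres.r by omega] at h1
    rw [h1]
    exact Prod.ext rfl (by simp only; omega)
  have hle : 2 * pres.r ≤ phi Λ X := by
    refine le_phi ⟨X, hX.finite⟩ hX.indec _ (fun Y hY => ?_) fun t ht => ?_
    · have h1 := (isNthSyzygy_iff (p := (0, pres.N + 1)) hX _ (sharp_proper hc hr)).1 hY
      rw [hlast] at h1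
      exact h1.projective_iff.2 (sharp_c_neg_one hc).symm
    · have hp := sharp_proper hc hr t ht
      obtain ⟨Y, hY⟩ := exists_isIv_of_le _ _ hp.1 hp.2.le
      exact ⟨Y, (isNthSyzygy_iff (p := (0, pres.N + 1)) hX t fun s hs =>
        sharp_proper hc hr s (by omega)).2 hY, fun h => hp.2.ne (hY.projective_iff.1 h)⟩
  exact le_trans (by exact_mod_cast hle)
    (le_iSup (fun M : FGMod Λ => (phi Λ M.1 : ℕ∞)) ⟨X, hX.finite⟩)

end Sharp

/-! ### Path algebras of oriented cycles modulo monomial relations -/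

open Polynomial

/-- The algebra `Λ` is the path algebra of the oriented cycle on `ZMod N` modulo monomial
relations, with Kupisch series `c`: the `e a` are the idempotents of the vertices, `x` is the sum
of all arrows, and `x ^ n * e a` is the path of length `n` starting at `a`. -/
structure NakData (K Λ : Type) [Field K] [Ring Λ] [Algebra K Λ] (N : ℕ) [NeZero N]
    (c : ZMod N → ℕ) where
  e : ZMod N → Λ
  x : Λ
  e_mul : ∀ a b, e a * e b = if a = b then e a else 0
  sum_e : ∑ a, e a = 1
  x_mul : ∀ a, x * e a = e (a + 1) * x
  span_eq : Submodule.span K {y : Λ | ∃ n a, y = x ^ n * e a} = ⊤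
  path_eq_zero : ∀ a, x ^ c a * e a = 0
  path_ne_zero : ∀ a n, n < c a → x ^ n * e a ≠ 0

namespace NakData

variable {K Λ : Type} [Field K] [Ring Λ] [Algebra K Λ] {N : ℕ} [NeZero N] {c : ZMod N → ℕ}
  (D : NakData K Λ N c)

lemma x_pow_mul (n : ℕ) (a : ZMod N) : D.x ^ n * D.e a = D.e (a + n) * D.x ^ n := by
  induction n generalizing a with
  | zero => simp
  | succ n ih =>
    rw [pow_succ, mul_assoc, D.x_mul, ← mul_assoc, ih, mul_assoc]
    congr 2
    push_cast; ring

lemma path_zero_of_le {a : ZMod N} {n : ℕ} (h : c a ≤ n) : D.x ^ n * D.e a = 0 := by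
  obtain ⟨m, rfl⟩ := Nat.exists_eq_add_of_le' h
  rw [pow_add, mul_assoc, D.path_eq_zero, mul_zero]

lemma x_nilpotent : IsNilpotent D.x := by
  refine ⟨∑ a, c a, ?_⟩
  rw [← mul_one (D.x ^ _), ← D.sum_e, Finset.mul_sum]
  exact Finset.sum_eq_zero fun a _ =>
    D.path_zero_of_le (Finset.single_le_sum (f := c) (fun _ _ => Nat.zero_le _) (Finset.mem_univ a))

/-- On `Λ e_a`, left multiplication by `y` may be replaced by a polynomial in `x`. -/
lemma exists_aeval (y : Λ) (a : ZMod N) : ∃ p : K[X], y * D.e a = aeval D.x p * D.e a := by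
  have hy : y ∈ Submodule.span K {y : Λ | ∃ n a, y = D.x ^ n * D.e a} := D.span_eq ▸ trivial
  induction hy using Submodule.span_induction with
  | mem y hy =>
    obtain ⟨n, b, rfl⟩ := hy
    by_cases hab : b = a
    · exact ⟨X ^ n, by rw [mul_assoc, D.e_mul, if_pos hab, hab, aeval_X_pow]⟩
    · exact ⟨0, by rw [mul_assoc, D.e_mul, if_neg hab, mul_zero, map_zero, zero_mul]⟩
  | zero => exact ⟨0, by simp⟩
  | add y z _ _ hy hz =>
    obtain ⟨p, hp⟩ := hy
    obtain ⟨q, hq⟩ := hz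
    exact ⟨p + q, by rw [add_mul, hp, hq, map_add, add_mul]⟩
  | smul k y _ hy =>
    obtain ⟨p, hp⟩ := hy
    exact ⟨k • p, by rw [smul_mul_assoc, hp, map_smul, smul_mul_assoc]⟩

lemma commute_aeval (p q : K[X]) : Commute (aeval D.x p) (aeval D.x q) := by
  rw [Commute, SemiconjBy, ← map_mul, mul_comm, map_mul]

/-- A polynomial in the nilpotent element `x` is a unit times a power of `x`. -/
lemma aeval_eq (p : K[X]) :
    ∃ (k : ℕ) (q : K[X]), IsUnit (aeval D.x q) ∧ aeval D.x p = aeval D.x q * D.x ^ k := by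
  by_cases hp : p = 0
  · obtain ⟨k, hk⟩ := D.x_nilpotent
    exact ⟨k, 1, by simp, by rw [hp, hk, map_zero, mul_zero]⟩
  obtain ⟨q, hq, hq0⟩ := exists_eq_pow_rootMultiplicity_mul_and_not_dvd p hp 0
  rw [C_0, sub_zero] at hq hq0
  refine ⟨p.rootMultiplicity 0, q, ?_, ?_⟩
  · have h0 : q.coeff 0 ≠ 0 := fun h => hq0 (X_dvd_iff.2 h)
    have h1 : aeval D.x q = aeval D.x q.divX * D.x + algebraMap K Λ (q.coeff 0) := by
      conv_lhs => rw [← divX_mul_X_add q]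
      rw [map_add, map_mul, aeval_C, aeval_X]
    have hcomm : Commute (aeval D.x q.divX) D.x := by
      have := D.commute_aeval q.divX X
      rwa [aeval_X] at this
    rw [h1]
    exact (hcomm.isNilpotent_mul_left D.x_nilpotent).isUnit_add_right_of_commute
      ((IsUnit.mk0 _ h0).map (algebraMap K Λ)) (Algebra.commute_algebraMap_right _ _)
  · conv_lhs => rw [hq]
    rw [mul_comm, map_mul, aeval_X_pow]

/-! ### Cyclic modules generated by a homogeneous element -/

section Homogeneous

variable {M : Type} [AddCommGroup M] [Module Λ M]

/-- `v` is concentrated at the vertex `a` and is killed by exactly the powers `x ^ k`, `n ≤ k`. -/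
def IsGen (a : ZMod N) (n : ℕ) (v : M) : Prop :=
  D.e a • v = v ∧ ∀ k, D.x ^ k • v = 0 ↔ n ≤ k

variable (M) in
/-- `M` is generated by a homogeneous element at the vertex `a` of nilpotency order `n > 0`. -/
def Cyc (a : ZMod N) (n : ℕ) : Prop :=
  0 < n ∧ ∃ v : M, D.IsGen a n v ∧ Submodule.span Λ {v} = ⊤

variable {D} {a : ZMod N} {n : ℕ} {v : M}

lemma smul_eq_aeval (hv : D.e a • v = v) (y : Λ) : ∃ p : K[X], y • v = aeval D.x p • v := by
  obtain ⟨p, hp⟩ := D.exists_aeval y a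
  exact ⟨p, by rw [← hv, ← mul_smul, hp, mul_smul]⟩

/-- The submodules generated by elements of `Λ v` are the `Λ (x ^ k v)`. -/
lemma span_eq_of_mem (hv : D.e a • v = v) {m : M} (hm : m ∈ Submodule.span Λ {v}) :
    ∃ k, Submodule.span Λ {m} = Submodule.span Λ {D.x ^ k • v} := by
  obtain ⟨y, rfl⟩ := Submodule.mem_span_singleton.1 hm
  obtain ⟨p, hp⟩ := smul_eq_aeval hv y
  obtain ⟨k, q, hq, h⟩ := D.aeval_eq p
  refine ⟨k, ?_⟩
  rw [hp, h, mul_smul]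
  exact Submodule.span_singleton_smul_eq hq _

lemma x_pow_smul_mem {W : Submodule Λ M} {j k : ℕ} (hjk : j ≤ k) (h : D.x ^ j • v ∈ W) :
    D.x ^ k • v ∈ W := by
  obtain ⟨i, rfl⟩ := Nat.exists_eq_add_of_le' hjk
  rw [pow_add, mul_smul]
  exact W.smul_mem _ h

lemma e_smul_x_pow (hv : D.e a • v = v) (k : ℕ) :
    D.e (a + k) • D.x ^ k • v = D.x ^ k • v := by
  rw [← mul_smul, ← D.x_pow_mul, mul_smul, hv]

lemma IsGen.x_pow (h : D.IsGen a n v) {k : ℕ} (hk : k ≤ n) :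
    D.IsGen (a + k) (n - k) (D.x ^ k • v) := by
  refine ⟨e_smul_x_pow h.1 k, fun j => ?_⟩
  rw [← mul_smul, ← pow_add, h.2]
  omega

/-- Every submodule of `Λ v` is one of the `Λ (x ^ k v)`. -/
lemma eq_span_of_le (h : D.IsGen a n v) {W : Submodule Λ M} (hW : W ≤ Submodule.span Λ {v}) :
    ∃ k ≤ n, W = Submodule.span Λ {D.x ^ k • v} ∧ ∀ j, D.x ^ j • v ∈ W ↔ k ≤ j := by
  classical
  have hex : ∃ k, D.x ^ k • v ∈ W := ⟨n, by rw [(h.2 n).2 le_rfl]; exact zero_mem _⟩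
  refine ⟨Nat.find hex, Nat.find_min' hex (by rw [(h.2 n).2 le_rfl]; exact zero_mem _), ?_,
    fun j => ⟨fun hj => Nat.find_min' hex hj, fun hj => x_pow_smul_mem hj (Nat.find_spec hex)⟩⟩
  refine le_antisymm (fun m hm => ?_) ((Submodule.span_singleton_le_iff_mem _ _).2
    (Nat.find_spec hex))
  obtain ⟨k, hk⟩ := span_eq_of_mem h.1 (hW hm)
  have h1 : D.x ^ k • v ∈ W := by
    have : D.x ^ k • v ∈ Submodule.span Λ {m} := hk ▸ Submodule.mem_span_singleton_self _
    exact (Submodule.span_singleton_le_iff_mem m W).2 hm this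
  have h2 : m ∈ Submodule.span Λ {D.x ^ k • v} := hk ▸ Submodule.mem_span_singleton_self _
  refine (Submodule.span_singleton_le_iff_mem _ _).2 ?_ h2
  exact x_pow_smul_mem (Nat.find_min' hex h1) (Submodule.mem_span_singleton_self _)

lemma cyc_span (h : D.IsGen a n v) (hn : 0 < n) :
    D.Cyc (Submodule.span Λ {v}) a n := by
  refine ⟨hn, ⟨v, Submodule.mem_span_singleton_self v⟩, ⟨Subtype.ext h.1, fun k => ?_⟩, ?_⟩
  · rw [← h.2]
    exact ⟨fun h => congrArg Subtype.val h, fun h => Subtype.ext h⟩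
  · rw [eq_top_iff]
    rintro ⟨m, hm⟩ -
    obtain ⟨y, rfl⟩ := Submodule.mem_span_singleton.1 hm
    exact Submodule.mem_span_singleton.2 ⟨y, rfl⟩

/-- A generator at the vertex `a` of a nonzero module has a positive order. -/
lemma cyc_of_span (hv : D.e a • v = v) (hs : Submodule.span Λ {v} = ⊤) [Nontrivial M] :
    ∃ n, D.Cyc M a n := by
  classical
  obtain ⟨k, hk⟩ := D.x_nilpotent
  have hex : ∃ k, D.x ^ k • v = 0 := ⟨k, by rw [hk, zero_smul]⟩
  refine ⟨Nat.find hex, Nat.pos_of_ne_zero fun h0 => ?_, v, ⟨hv, fun j => ⟨fun hj =>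
    Nat.find_min' hex hj, fun hj => ?_⟩⟩, hs⟩
  · have := Nat.find_spec hex
    rw [h0, pow_zero, one_smul] at this
    rw [this, Submodule.span_zero_singleton] at hs
    exact bot_ne_top hs
  · have := x_pow_smul_mem (W := ⊥) hj ((Submodule.mem_bot Λ).2 (Nat.find_spec hex))
    exact (Submodule.mem_bot Λ).1 this

namespace Cyc

lemma nontrivial (h : D.Cyc M a n) : Nontrivial M := by
  obtain ⟨hn, v, hv, -⟩ := h
  refine nontrivial_of_ne v 0 fun h0 => ?_
  have := (hv.2 0).1 (by rw [h0, smul_zero])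
  omega

lemma finite (h : D.Cyc M a n) : Module.Finite Λ M := by
  obtain ⟨-, v, -, hs⟩ := h
  exact ⟨⟨{v}, by simpa using hs⟩⟩

lemma exists_sub (h : D.Cyc M a n) : ∃ v : M, D.IsGen a n v ∧ Submodule.span Λ {v} = ⊤ ∧
    ∀ W : Submodule Λ M, ∃ k ≤ n, W = Submodule.span Λ {D.x ^ k • v} ∧
      ∀ j, D.x ^ j • v ∈ W ↔ k ≤ j := by
  obtain ⟨-, v, hv, hs⟩ := h
  exact ⟨v, hv, hs, fun W => eq_span_of_le hv (hs ▸ le_top)⟩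

lemma uniserial {M : ModuleCat.{0} Λ} (h : D.Cyc M a n) : IsUniserial Λ M := by
  intro N₁ N₂
  obtain ⟨v, hv, -, hW⟩ := h.exists_sub
  obtain ⟨k, -, h1, h1'⟩ := hW N₁
  obtain ⟨j, -, h2, h2'⟩ := hW N₂
  rcases le_total j k with h | h
  · left
    rw [h1, Submodule.span_singleton_le_iff_mem]
    exact (h2' _).2 h
  · right
    rw [h2, Submodule.span_singleton_le_iff_mem]
    exact (h1' _).2 h

lemma equiv (h : D.Cyc M a n) {M' : Type} [AddCommGroup M'] [Module Λ M'] (f : M ≃ₗ[Λ] M') :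
    D.Cyc M' a n := by
  obtain ⟨hn, v, hv, hs⟩ := h
  refine ⟨hn, f v, ⟨by rw [← map_smul, hv.1], fun k => ?_⟩, ?_⟩
  · rw [← map_smul, map_eq_zero_iff f f.injective, hv.2]
  · have := congrArg (Submodule.map f.toLinearMap) hs
    rw [Submodule.map_span, Set.image_singleton, Submodule.map_top,
      LinearMap.range_eq_top.2 f.surjective] at this
    exact this

/-- A cyclic module with homogeneous generator is determined by its vertex and length. -/
lemma iso (h : D.Cyc M a n) {M' : Type} [AddCommGroup M'] [Module Λ M'] (h' : D.Cyc M' a n) :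
    Nonempty (M ≃ₗ[Λ] M') := by
  obtain ⟨-, v, hv, hs⟩ := h
  obtain ⟨-, w, hw, hs'⟩ := h'
  have hsurj : ∀ {T : Type} [AddCommGroup T] [Module Λ T] {u : T}, Submodule.span Λ {u} = ⊤ →
      Function.Surjective (LinearMap.toSpanSingleton Λ T u) := by
    intro T _ _ u hu
    rw [← LinearMap.range_eq_top, LinearMap.range_toSpanSingleton, hu]
  have hz : ∀ {T : Type} [AddCommGroup T] [Module Λ T] {u : T}, D.IsGen a n u →
      ∀ (q : K[X]), IsUnit (aeval D.x q) → ∀ k, (aeval D.x q * D.x ^ k) • u = 0 ↔ n ≤ k := by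
    intro T _ _ u hu q hq k
    rw [mul_smul, hq.smul_eq_zero, hu.2]
  have hker : LinearMap.ker (LinearMap.toSpanSingleton Λ M v) =
      LinearMap.ker (LinearMap.toSpanSingleton Λ M' w) := by
    ext y
    obtain ⟨p, hp⟩ := D.exists_aeval y a
    obtain ⟨k, q, hq, h⟩ := D.aeval_eq p
    rw [LinearMap.mem_ker, LinearMap.mem_ker, LinearMap.toSpanSingleton_apply,
      LinearMap.toSpanSingleton_apply]
    have h1 : y • v = (aeval D.x q * D.x ^ k) • v := by
      rw [← hv.1, ← mul_smul, hp, mul_smul, h]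
    have h2 : y • w = (aeval D.x q * D.x ^ k) • w := by
      rw [← hw.1, ← mul_smul, hp, mul_smul, h]
    rw [h1, h2, hz hv q hq, hz hw q hq]
  exact ⟨((LinearMap.quotKerEquivOfSurjective _ (hsurj hs)).symm.trans
    (Submodule.quotEquivOfEq _ _ hker)).trans (LinearMap.quotKerEquivOfSurjective _ (hsurj hs'))⟩

lemma simple (h : D.Cyc M a 1) : IsSimpleModule Λ M := by
  have := h.nontrivial
  obtain ⟨v, hv, hs, hW⟩ := h.exists_sub
  refine isSimpleModule_iff Λ M |>.2 ⟨fun W => ?_⟩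
  obtain ⟨k, hk, h1, -⟩ := hW W
  interval_cases k
  · right; rw [h1, pow_zero, one_smul, hs]
  · left; rw [h1, (hv.2 1).2 le_rfl, Submodule.span_zero_singleton]

/-- A module at the vertex `a` of order `1` determines `a`. -/
lemma vertex_eq {b : ZMod N} (h : D.Cyc M a 1) (h' : D.Cyc M b 1) : a = b := by
  obtain ⟨-, v, hv, hs⟩ := h
  have := h'.nontrivial
  obtain ⟨-, w, hw, hs'⟩ := h'
  by_contra hab
  have hw' : w ∈ Submodule.span Λ {v} := hs ▸ trivial
  obtain ⟨y, rfl⟩ := Submodule.mem_span_singleton.1 hw'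
  obtain ⟨p, hp⟩ := smul_eq_aeval hv.1 y
  obtain ⟨k, q, -, h⟩ := D.aeval_eq p
  have hb : D.e b • v = 0 := by
    rw [← hv.1, ← mul_smul, D.e_mul, if_neg (Ne.symm hab), zero_smul]
  have h0 : y • v = 0 := by
    -- `y v` is a multiple of `v` by a scalar, hence concentrated at `a` and at `b`
    have h1 : y • v = algebraMap K Λ (p.coeff 0) • v := by
      rw [hp]
      conv_lhs => rw [← divX_mul_X_add p]
      rw [map_add, map_mul, aeval_C, aeval_X, add_smul, mul_smul, ← pow_one D.x,
        (hv.2 1).2 le_rfl, smul_zero, zero_add]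
    rw [← hw.1, h1, ← mul_smul, ← Algebra.commutes, mul_smul, hb, smul_zero]
  rw [h0, Submodule.span_zero_singleton] at hs'
  exact bot_ne_top hs'

lemma radical_eq (h : D.Cyc M a n) : ∃ v : M, D.IsGen a n v ∧ Submodule.span Λ {v} = ⊤ ∧
    radical Λ M = Submodule.span Λ {D.x • v} ∧ radical Λ M ≠ ⊤ := by
  have hn := h.1
  obtain ⟨v, hv, hs, hW⟩ := h.exists_sub
  have hne : Submodule.span Λ {D.x • v} ≠ ⊤ := by
    intro h0
    have hv' : v ∈ Submodule.span Λ {D.x • v} := h0 ▸ trivial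
    obtain ⟨y, hy⟩ := Submodule.mem_span_singleton.1 hv'
    have h1 := (hv.x_pow hn).1
    rw [pow_one] at h1
    obtain ⟨p, hp⟩ := smul_eq_aeval h1 y
    rw [hy] at hp
    have h2 : D.x ^ (n - 1) • v = 0 := by
      have hc := D.commute_aeval (X ^ (n - 1)) p
      rw [aeval_X_pow] at hc
      rw [hp, ← mul_smul, hc.eq, mul_smul, ← mul_smul (D.x ^ (n - 1)), ← pow_succ,
        (hv.2 _).2 (by omega), smul_zero]
    have := (hv.2 _).1 h2
    omega
  have hr : radical Λ M = Submodule.span Λ {D.x • v} := by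
    refine le_antisymm (sSup_le fun W hW' => ?_) (le_sSup hne)
    obtain ⟨k, -, h1, -⟩ := hW W
    rcases k with _ | k
    · rw [pow_zero, one_smul, hs] at h1
      exact absurd h1 hW'
    · rw [h1, Submodule.span_singleton_le_iff_mem, pow_succ, mul_smul]
      exact Submodule.smul_mem _ _ (Submodule.mem_span_singleton_self _)
  exact ⟨v, hv, hs, hr, hr ▸ hne⟩

lemma radical_ne_bot_iff (h : D.Cyc M a n) : radical Λ M ≠ ⊥ ↔ 1 < n := by
  obtain ⟨v, hv, hs, hr, hne⟩ := h.radical_eq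
  rw [hr, Ne, Submodule.span_singleton_eq_bot, ← pow_one D.x, hv.2]
  omega

lemma radical_cyc (h : D.Cyc M a n) (hn : 1 < n) : D.Cyc (radical Λ M) (a + 1) (n - 1) := by
  obtain ⟨v, hv, hs, hr, hne⟩ := h.radical_eq
  rw [hr]
  have := cyc_span (hv.x_pow (k := 1) (by omega)) (by omega)
  rwa [Nat.cast_one, pow_one] at this

lemma top_cyc (h : D.Cyc M a n) : D.Cyc (M ⧸ radical Λ M) a 1 := by
  have hn := h.1
  obtain ⟨v, hv, hs, hr, hne⟩ := h.radical_eq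
  refine ⟨one_pos, (radical Λ M).mkQ v, ⟨by rw [← map_smul, hv.1], fun k => ?_⟩, ?_⟩
  · rw [← map_smul, Submodule.mkQ_apply, Submodule.Quotient.mk_eq_zero]
    constructor
    · intro hk
      by_contra h0
      have : k = 0 := by omega
      subst this
      rw [pow_zero, one_smul] at hk
      exact hne (eq_top_iff.2 (hs ▸ (Submodule.span_singleton_le_iff_mem _ _).2 hk))
    · intro hk
      rw [hr]
      refine x_pow_smul_mem hk ?_
      rw [pow_one]
      exact Submodule.mem_span_singleton_self _
  · have := congrArg (Submodule.map (radical Λ M).mkQ) hs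
    rwa [Submodule.map_span, Set.image_singleton, Submodule.map_top, Submodule.range_mkQ] at this

lemma socle_cyc (h : D.Cyc M a n) : D.Cyc (socle Λ M) (a + n - 1) 1 := by
  have hn := h.1
  obtain ⟨v, hv, hs, hW⟩ := h.exists_sub
  have hg := hv.x_pow (k := n - 1) (by omega)
  have he : socle Λ M = Submodule.span Λ {D.x ^ (n - 1) • v} := by
    refine le_antisymm (sInf_le ?_) (le_sInf fun W hW' => ?_)
    · rw [Set.mem_ofPred_eq, Ne, Submodule.span_singleton_eq_bot, hv.2]
      omega
    · obtain ⟨k, -, h1, h2⟩ := hW W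
      rw [Submodule.span_singleton_le_iff_mem, h2]
      by_contra hk
      apply hW'
      rw [h1, (hv.2 k).2 (by omega), Submodule.span_zero_singleton]
  rw [he]
  have h1 := cyc_span hg (by omega)
  rw [show n - (n - 1) = 1 by omega, Nat.cast_sub hn, Nat.cast_one, ← add_sub_assoc] at h1
  exact h1

lemma length (h : D.Cyc M a n) : Module.length Λ M = n := by
  have hn := h.1
  induction n generalizing a M with
  | zero => omega
  | succ n ih =>
    have hs : IsSimpleModule Λ (M ⧸ radical Λ M) := h.top_cyc.simple
    have h1 := Module.length_eq_add_of_exact (radical Λ M).subtype (radical Λ M).mkQ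
      (Submodule.injective_subtype _) (radical Λ M).mkQ_surjective
      (LinearMap.exact_subtype_mkQ _)
    rw [Module.length_eq_one Λ (M ⧸ radical Λ M)] at h1
    have h2 : Module.length Λ (radical Λ M) = n := by
      by_cases h0 : 1 < n + 1
      · exact ih (h.radical_cyc h0) (by omega)
      · have h3 : n = 0 := by omega
        have h4 : radical Λ M = ⊥ := by
          by_contra hc
          exact h0 (h.radical_ne_bot_iff.1 hc)
        rw [h4, h3, Module.length_bot, Nat.cast_zero]
    rw [h1, h2]
    norm_cast

end Cyc

lemma exists_vertex_smul_ne {m : M} (hm : m ≠ 0) : ∃ a, D.e a • m ≠ 0 := by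
  by_contra! h
  apply hm
  rw [← one_smul Λ m, ← D.sum_e, Finset.sum_smul]
  exact Finset.sum_eq_zero fun a _ => h a

lemma e_smul_e_smul (a : ZMod N) (m : M) : D.e a • D.e a • m = D.e a • m := by
  rw [← mul_smul, D.e_mul, if_pos rfl]

variable (D) in
lemma exists_cyc_of_simple (h : IsSimpleModule Λ M) : ∃ a, D.Cyc M a 1 := by
  have := IsSimpleModule.nontrivial Λ M
  obtain ⟨m, hm⟩ := exists_ne (0 : M)
  obtain ⟨a, ha⟩ := exists_vertex_smul_ne (D := D) hm
  obtain ⟨n, hn⟩ := cyc_of_span (e_smul_e_smul (D := D) a m)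
    (IsSimpleModule.span_singleton_eq_top Λ ha)
  have h1 := hn.length
  rw [Module.length_eq_one Λ M] at h1
  have : 1 = n := by exact_mod_cast h1
  exact ⟨a, this ▸ hn⟩

end Homogeneous

end NakData

/-! ### Indecomposable modules over the path algebra are cyclic -/

open Polynomial

namespace NakData

variable {K Λ : Type} [Field K] [Ring Λ] [Algebra K Λ] {N : ℕ} [NeZero N] {c : ZMod N → ℕ}
  {D : NakData K Λ N c}

section Retract

variable {M : Type} [AddCommGroup M] [Module Λ M] {a : ZMod N} {n : ℕ} {v : M}

/-- If `x ^ n` annihilates `M` and `v` is homogeneous of order `n`, then some endomorphism of `M`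
has image in `Λ v` and fixes the socle element `x ^ (n - 1) v`. It is
`m ↦ ∑ i < n, l (e_s x ^ i m) x ^ (n - 1 - i) v`, for `s` the vertex of the socle and `l` a
linear form with `l (x ^ (n - 1) v) = 1`. -/
lemma exists_retract (hM : ∀ m : M, D.x ^ n • m = 0) (hv : D.IsGen a n v) (hn : 0 < n) :
    ∃ ρ : M →ₗ[Λ] M, (∀ m, ρ m ∈ Submodule.span Λ {v}) ∧
      ρ (D.x ^ (n - 1) • v) = D.x ^ (n - 1) • v := by
  let _ : Module K M := Module.compHom M (algebraMap K Λ)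
  have : IsScalarTower K Λ M := IsScalarTower.of_algebraMap_smul fun _ _ => rfl
  have hcomm : ∀ (k : K) (y : Λ) (m : M), y • k • m = k • y • m := fun k y m => by
    rw [← algebraMap_smul Λ k m, ← algebraMap_smul Λ k (y • m), ← mul_smul, ← mul_smul,
      Algebra.commutes]
  have hw : D.x ^ (n - 1) • v ≠ 0 := by rw [Ne, hv.2]; omega
  obtain ⟨l, hl⟩ := Module.Projective.exists_dual_eq_one K hw
  set s : ZMod N := a + (n - 1 : ℕ) with hs
  have hsw : D.e s • D.x ^ (n - 1) • v = D.x ^ (n - 1) • v := e_smul_x_pow hv.1 _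
  let ρ₀ : M →+ M := AddMonoidHom.mk'
    (fun m => ∑ i ∈ Finset.range n, l (D.e s • D.x ^ i • m) • D.x ^ (n - 1 - i) • v) (by
      intro m m'
      simp only [smul_add, map_add, add_smul, Finset.sum_add_distrib])
  have hρ₀ : ∀ m, ρ₀ m =
    ∑ i ∈ Finset.range n, l (D.e s • D.x ^ i • m) • D.x ^ (n - 1 - i) • v := fun _ => rfl
  have hx : ∀ m, ρ₀ (D.x • m) = D.x • ρ₀ m := by
    intro m
    obtain ⟨k, rfl⟩ : ∃ k, n = k + 1 := ⟨n - 1, by omega⟩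
    rw [hρ₀, hρ₀, Finset.smul_sum, Finset.sum_range_succ, Finset.sum_range_succ']
    have h1 : D.x ^ k • D.x • m = 0 := by rw [← mul_smul, ← pow_succ, hM]
    have h2 : D.x • D.x ^ (k + 1 - 1 - 0) • v = 0 := by
      rw [← mul_smul, ← pow_succ', show k + 1 - 1 - 0 + 1 = k + 1 by omega, hM]
    rw [h1, smul_zero, map_zero, zero_smul, hcomm, h2, smul_zero]
    congr 1
    refine Finset.sum_congr rfl fun i hi => ?_
    have hi' := Finset.mem_range.1 hi
    rw [hcomm, ← mul_smul (D.x ^ i) D.x m, ← mul_smul D.x (D.x ^ _), ← pow_succ, ← pow_succ',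
      show k + 1 - 1 - (i + 1) + 1 = k + 1 - 1 - i by omega]
  have he : ∀ b m, ρ₀ (D.e b • m) = D.e b • ρ₀ m := by
    intro b m
    rw [hρ₀, hρ₀, Finset.smul_sum]
    refine Finset.sum_congr rfl fun i hi => ?_
    have hi' := Finset.mem_range.1 hi
    have hv' := e_smul_x_pow hv.1 (n - 1 - i)
    have hsi : s = a + ((n - 1 - i : ℕ) : ZMod N) + i := by
      rw [hs, add_assoc, ← Nat.cast_add, show n - 1 - i + i = n - 1 by omega]
    rw [hcomm, ← mul_smul (D.x ^ i), D.x_pow_mul, mul_smul, ← mul_smul (D.e s), D.e_mul]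
    conv_rhs => rw [← hv', ← mul_smul (D.e b), D.e_mul]
    by_cases hb : b = a + ((n - 1 - i : ℕ) : ZMod N)
    · rw [if_pos hb, if_pos (by rw [hsi, hb]), hb, hv']
    · rw [if_neg hb, if_neg (fun h => hb (add_right_cancel (h.symm.trans hsi))), zero_smul,
        zero_smul, map_zero, zero_smul, smul_zero]
  have hall : ∀ y : Λ, ∀ m, ρ₀ (y • m) = y • ρ₀ m := by
    intro y
    have hy : y ∈ Submodule.span K {y : Λ | ∃ n a, y = D.x ^ n * D.e a} := D.span_eq ▸ trivial
    induction hy using Submodule.span_induction with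
    | mem y hy =>
      obtain ⟨k, b, rfl⟩ := hy
      intro m
      rw [mul_smul, mul_smul, ← he]
      generalize D.e b • m = m'
      induction k with
      | zero => rw [pow_zero, one_smul, one_smul]
      | succ k ih => rw [pow_succ', mul_smul, hx, ih, mul_smul]
    | zero => intro m; rw [zero_smul, zero_smul, map_zero]
    | add y z _ _ hy hz => intro m; rw [add_smul, map_add, hy, hz, add_smul]
    | smul k y _ hy =>
      intro m
      rw [smul_assoc, smul_assoc, ← hy, hρ₀, hρ₀, Finset.smul_sum]
      refine Finset.sum_congr rfl fun i _ => ?_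
      rw [hcomm, hcomm, map_smul, smul_assoc]
  refine ⟨{ ρ₀ with map_smul' := hall }, fun m => ?_, ?_⟩
  · change ρ₀ m ∈ _
    rw [hρ₀]
    refine Submodule.sum_mem _ fun i _ => ?_
    rw [← algebraMap_smul Λ]
    exact Submodule.smul_mem _ _ (Submodule.smul_mem _ _ (Submodule.mem_span_singleton_self v))
  · change ρ₀ _ = _
    rw [hρ₀, Finset.sum_eq_single 0]
    · rw [pow_zero, one_smul, hsw, hl, one_smul, Nat.sub_zero]
    · intro i _ hi
      rw [← mul_smul (D.x ^ i), ← pow_add, (hv.2 _).2 (by omega), smul_zero, map_zero, zero_smul]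
    · intro h
      exact absurd (Finset.mem_range.2 hn) h

end Retract

variable (D) in
/-- Indecomposable finitely generated modules are generated by one homogeneous element. -/
lemma exists_cyc_of_indec [IsArtinianRing Λ] {M : ModuleCat.{0} Λ} (hf : Module.Finite Λ M)
    (hM : Indec Λ M) : ∃ a n, D.Cyc M a n := by
  classical
  have := hM.1
  have hex : ∃ n, ∀ m : M, D.x ^ n • m = 0 := by
    obtain ⟨k, hk⟩ := D.x_nilpotent
    exact ⟨k, fun m => by rw [hk, zero_smul]⟩
  have hspec := Nat.find_spec hex
  have hmin := fun m => Nat.find_min hex (m := m)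
  generalize Nat.find hex = n at *
  have hn : 0 < n := by
    by_contra h0
    obtain ⟨m, hm⟩ := exists_ne (0 : M)
    have := hspec m
    rw [show n = 0 by omega, pow_zero, one_smul] at this
    exact hm this
  have h1 := hmin (n - 1) (by omega)
  push Not at h1
  obtain ⟨m, hm⟩ := h1
  obtain ⟨a, ha⟩ : ∃ a, D.x ^ (n - 1) • D.e a • m ≠ 0 := by
    by_contra! h
    apply hm
    rw [← one_smul Λ m, ← D.sum_e, Finset.sum_smul, Finset.smul_sum]
    exact Finset.sum_eq_zero fun a _ => h a
  set v := D.e a • m with hvdef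
  have hv : D.IsGen a n v := by
    refine ⟨e_smul_e_smul a m, fun k => ⟨fun hk => ?_, fun hk => ?_⟩⟩
    · by_contra hc
      refine ha ((Submodule.mem_bot Λ).1 (x_pow_smul_mem (show k ≤ n - 1 by omega) ?_))
      exact (Submodule.mem_bot Λ).2 hk
    · exact (Submodule.mem_bot Λ).1 (x_pow_smul_mem hk ((Submodule.mem_bot Λ).2 (hspec v)))
  refine ⟨a, n, hn, v, hv, ?_⟩
  obtain ⟨ρ, hρ, hρv⟩ := exists_retract hspec hv hn
  set U := Submodule.span Λ {v} with hU
  have hdisj : LinearMap.ker ρ ⊓ U = ⊥ := by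
    obtain ⟨k, hk, h2, h3⟩ := eq_span_of_le hv (inf_le_right : LinearMap.ker ρ ⊓ U ≤ U)
    by_cases hkn : k ≤ n - 1
    · have h4 : ρ (D.x ^ (n - 1) • v) = 0 := ((h3 (n - 1)).2 hkn).1
      rw [hρv] at h4
      exact absurd h4 ha
    · rw [h2, (hv.2 k).2 (by omega), Submodule.span_zero_singleton]
  let g : U →ₗ[Λ] U := (ρ.codRestrict U hρ) ∘ₗ U.subtype
  have hg : Function.Injective g := by
    rw [← LinearMap.ker_eq_bot, LinearMap.ker_eq_bot']
    rintro ⟨u, hu⟩ h0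
    have h2 : ρ u = 0 := congrArg Subtype.val h0
    have h3 : u ∈ LinearMap.ker ρ ⊓ U := ⟨h2, hu⟩
    rw [hdisj, Submodule.mem_bot] at h3
    exact Subtype.ext h3
  have hsurj := IsArtinian.surjective_of_injective_endomorphism g hg
  have hc : IsCompl U (LinearMap.ker ρ) := by
    refine ⟨disjoint_iff.2 (by rw [inf_comm, hdisj]), codisjoint_iff.2 (eq_top_iff.2 ?_)⟩
    intro m _
    obtain ⟨u, hu⟩ := hsurj ⟨ρ m, hρ m⟩
    have hu' : ρ u = ρ m := congrArg Subtype.val hu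
    refine Submodule.mem_sup.2 ⟨u, u.2, m - u, ?_, by abel⟩
    rw [LinearMap.mem_ker, map_sub, hu', sub_self]
  rcases hM.2 _ _ hc with h0 | h0
  · rw [hU, Submodule.span_singleton_eq_bot] at h0
    exact absurd (by rw [h0, smul_zero]) ha
  · have := hc.sup_eq_top
    rwa [h0, sup_bot_eq] at this

end NakData
/-! ### Projective and simple modules over the path algebra -/

namespace NakData

variable {K Λ : Type} [Field K] [Ring Λ] [Algebra K Λ]

section Proj

variable {N : ℕ} [NeZero N] {c : ZMod N → ℕ} (D : NakData K Λ N c)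

/-- The indecomposable projective module `Λ e_i`. -/
def proj (i : ZMod N) : ModuleCat.{0} Λ := ModuleCat.of Λ (Submodule.span Λ {D.e i})

/-- The simple module at the vertex `i`. -/
def simpleMod (i : ZMod N) : ModuleCat.{0} Λ :=
  ModuleCat.of Λ (D.proj i ⧸ radical Λ (D.proj i))

lemma isGen_e (i : ZMod N) : D.IsGen i (c i) (D.e i) := by
  refine ⟨by rw [smul_eq_mul, D.e_mul, if_pos rfl], fun k => ?_⟩
  rw [smul_eq_mul]
  refine ⟨fun h => ?_, fun h => D.path_zero_of_le h⟩
  by_contra hk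
  exact D.path_ne_zero i k (by omega) h

lemma proj_cyc (hc : ∀ i, 0 < c i) (i : ZMod N) : D.Cyc (D.proj i) i (c i) :=
  cyc_span (D.isGen_e i) (hc i)

lemma simp_cyc (hc : ∀ i, 0 < c i) (i : ZMod N) : D.Cyc (D.simpleMod i) i 1 :=
  (D.proj_cyc hc i).top_cyc

/-- `Λ e_i` is a direct summand of `Λ`, with right multiplication by `e_i` as retraction. -/
lemma proj_projective (i : ZMod N) : Module.Projective Λ (D.proj i) := by
  refine Module.Projective.of_split (P := Submodule.span Λ {D.e i})
    (Submodule.subtype _) (LinearMap.toSpanSingleton Λ (Submodule.span Λ {D.e i})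
      ⟨D.e i, Submodule.mem_span_singleton_self _⟩) ?_
  ext ⟨y, hy⟩
  obtain ⟨z, rfl⟩ := Submodule.mem_span_singleton.1 hy
  change (z * D.e i) * D.e i = z * D.e i
  rw [mul_assoc, D.e_mul, if_pos rfl]

lemma proj_cover (hc : ∀ i, 0 < c i) (i : ZMod N) :
    ∃ f : D.proj i →ₗ[Λ] D.simpleMod i, IsProjCover Λ f :=
  ⟨(radical Λ (D.proj i)).mkQ, (D.proj_cyc hc i).uniserial.isProjCover (D.proj_projective i)
    (D.simp_cyc hc i).nontrivial (Submodule.mkQ_surjective _)⟩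

include D in
/-- Only the finitely many paths `x ^ n * e a` with `n < c a` are nonzero, so that `Λ` is finite
dimensional. -/
lemma finite_algebra : Module.Finite K Λ := by
  classical
  refine ⟨⟨(Finset.univ.sigma fun a => Finset.range (c a)).image
    fun p => D.x ^ p.2 * D.e p.1, ?_⟩⟩
  rw [eq_top_iff, ← D.span_eq, Submodule.span_le]
  rintro _ ⟨n, a, rfl⟩
  by_cases h : n < c a
  · refine Submodule.subset_span ?_
    simp only [Finset.coe_image, Set.mem_image]
    exact ⟨⟨a, n⟩, by simpa using h, rfl⟩
  · rw [D.path_zero_of_le (by omega)]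
    exact zero_mem _

variable {D} in
lemma vertex_eq_of_equiv {M M' : Type} [AddCommGroup M] [Module Λ M] [AddCommGroup M']
    [Module Λ M'] {a b : ZMod N} (h : D.Cyc M a 1) (h' : D.Cyc M' b 1)
    (f : Nonempty (M ≃ₗ[Λ] M')) : a = b :=
  (h.equiv f.some).vertex_eq h'

end Proj

/-! ### The presentation of the algebra with Kupisch series `sharpC` -/

section Pres

variable {r : ℕ} (D : NakData K Λ (r + 2) (sharpC (r + 2)))

lemma two_le_sharpC (i : ZMod (r + 2)) : 2 ≤ sharpC (r + 2) i := by
  unfold sharpC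
  split_ifs <;> omega

/-- The starting vertices `0, …, r - 1` of the relations. -/
def start (r : ℕ) (j : ZMod r) : ZMod (r + 2) := (j.val : ZMod (r + 2))

variable (hr : 1 ≤ r)
include hr

lemma val_start (j : ZMod r) : (start r j).val = j.val := by
  have : NeZero r := ⟨by omega⟩
  have := ZMod.val_lt j
  exact ZMod.val_natCast_of_lt (by omega)

lemma exists_start_iff (v : ZMod (r + 2)) : (∃ j, start r j = v) ↔ v.val < r := by
  have : NeZero r := ⟨by omega⟩
  constructor
  · rintro ⟨j, rfl⟩
    rw [val_start hr]
    exact ZMod.val_lt j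
  · intro h
    exact ⟨(v.val : ZMod r), by rw [start, ZMod.val_natCast_of_lt h, ZMod.natCast_zmod_val]⟩

/-- The inequality `c v ≤ c (v + 1) + 1` is strict exactly at the vertices `0, …, r - 1`. -/
lemma start_iff (v : ZMod (r + 2)) :
    (∃ j, start r j = v) ↔ sharpC (r + 2) v ≠ sharpC (r + 2) (v + 1) + 1 := by
  rw [exists_start_iff hr]
  have hv := ZMod.val_lt v
  obtain ⟨t, ht, rfl⟩ : ∃ t < r + 2, v = (t : ZMod (r + 2)) :=
    ⟨v.val, hv, (ZMod.natCast_zmod_val v).symm⟩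
  rw [ZMod.val_natCast_of_lt ht]
  have hlast : ((r + 1 : ℕ) : ZMod (r + 2)) = -1 := by
    have h : ((r + 2 : ℕ) : ZMod (r + 2)) = 0 := ZMod.natCast_self _
    push_cast at h ⊢
    linear_combination h
  have hm : (-1 : ZMod (r + 2)) ≠ 0 := by
    have : Fact (1 < r + 2) := ⟨by omega⟩
    exact neg_ne_zero.2 one_ne_zero
  rcases Nat.lt_or_ge t r with h | h
  · have h1 := natCast_ne (N := r + 2) (t := t + 1) (by omega) (by omega)
    have h2 : sharpC (r + 2) ((t : ZMod (r + 2)) + 1) = 2 * (r + 2) + 1 := by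
      rw [← Nat.cast_succ, sharpC, if_neg h1.1, if_neg h1.2]
    rw [h2]
    simp only [h, true_iff]
    unfold sharpC
    split_ifs <;> omega
  · simp only [not_lt.2 h, false_iff, not_not]
    rcases (show t = r ∨ t = r + 1 by omega) with rfl | rfl
    · have h1 := natCast_ne (N := t + 2) (t := t) (by omega) (by omega)
      rw [← Nat.cast_succ, hlast, sharpC, sharpC, if_neg h1.1, if_neg h1.2, if_neg hm, if_pos rfl]
    · rw [hlast, neg_add_cancel, sharpC, sharpC, if_neg hm, if_pos rfl, if_pos rfl]
      omega

/-- The cyclic Nakayama algebra with Kupisch series `sharpC (r + 2)` is given by `r` relations. -/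
def pres : CyclicNakayama K Λ where
  artinianBase := inferInstance
  finiteAlgebra := D.finite_algebra
  N := r + 2
  three_le_N := by omega
  r := r
  one_le_r := hr
  S := D.simpleMod
  S_simple i := (D.simp_cyc (fun i => by have := two_le_sharpC i; omega) i).simple
  S_complete T hT := by
    obtain ⟨a, ha⟩ := D.exists_cyc_of_simple hT
    exact ⟨a, ha.iso (D.simp_cyc (fun i => by have := two_le_sharpC i; omega) a)⟩
  S_distinct i j h :=
    vertex_eq_of_equiv (D.simp_cyc (fun i => by have := two_le_sharpC i; omega) i)
      (D.simp_cyc (fun i => by have := two_le_sharpC i; omega) j) h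
  nakayama M hf hM := by
    have := D.finite_algebra
    have := IsArtinianRing.of_finite K Λ
    obtain ⟨a, n, h⟩ := D.exists_cyc_of_indec hf hM
    exact h.uniserial
  P := D.proj
  P_finite i := (D.proj_cyc (fun i => by have := two_le_sharpC i; omega) i).finite
  P_projective := D.proj_projective
  P_cover := D.proj_cover fun i => by have := two_le_sharpC i; omega
  c := sharpC (r + 2)
  P_length i := hasLength_iff.2
    (D.proj_cyc (fun i => by have := two_le_sharpC i; omega) i).length
  two_le_c := two_le_sharpC
  layer M hf hM i ht hn := by
    have := D.finite_algebra
    have := IsArtinianRing.of_finite K Λ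
    have hS := D.simp_cyc fun i => by have := two_le_sharpC i; omega
    obtain ⟨a, n, h⟩ := D.exists_cyc_of_indec hf hM
    obtain rfl := vertex_eq_of_equiv h.top_cyc (hS i) ht
    exact (h.radical_cyc (h.radical_ne_bot_iff.1 hn)).top_cyc.iso (hS _)
  kOdd := start r
  kEven j := start r j + sharpC (r + 2) (start r j) - 1
  kOdd_mono j j' h := by rwa [val_start hr, val_start hr]
  relation_starts := start_iff hr
  relation_ends j := by ring
  soc_min j := by
    have hc : ∀ i : ZMod (r + 2), 0 < sharpC (r + 2) i := fun i => by
      have := two_le_sharpC i; omega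
    exact (D.proj_cyc hc _).socle_cyc.iso (D.simp_cyc hc _)
  soc_classes v := by
    have hc : ∀ i : ZMod (r + 2), 0 < sharpC (r + 2) i := fun i => by
      have := two_le_sharpC i; omega
    obtain ⟨j, hj⟩ := exists_end_eq (0 : ZMod r) (sharpC (r + 2)) (start r)
      (fun v hv => by_contra fun h => hv ((start_iff hr v).2 h)) v
    refine ⟨j, ?_⟩
    rw [← hj]
    exact (D.proj_cyc hc _).socle_cyc.iso (D.simp_cyc hc _)

end Pres

end NakData

/-! ### A model of the path algebra modulo relations -/

namespace Model

variable {N : ℕ} (c : ZMod N → ℕ)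

/-- The space with basis the pairs `(a, i)`, which stand for the paths of length `i` starting at
the vertex `a`. -/
abbrev V (N : ℕ) : Type := ZMod N × ℕ → ZMod 2

/-- The idempotent of the vertex `b`: it fixes the paths that end at `b` and kills the others. -/
def E (b : ZMod N) : Module.End (ZMod 2) (V N) where
  toFun f p := if p.1 + p.2 = b then f p else 0
  map_add' f g := by ext p; dsimp only [Pi.add_apply]; split_ifs <;> simp
  map_smul' s f := by
    ext p; dsimp only [Pi.smul_apply, RingHom.id_apply]; split_ifs <;> simp

/-- The sum of all arrows: it lengthens a path by one arrow, where paths of length at least `c a`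
starting at `a` vanish. -/
def X : Module.End (ZMod 2) (V N) where
  toFun f p := if 1 ≤ p.2 ∧ p.2 < c p.1 then f (p.1, p.2 - 1) else 0
  map_add' f g := by ext p; dsimp only [Pi.add_apply]; split_ifs <;> simp
  map_smul' s f := by
    ext p; dsimp only [Pi.smul_apply, RingHom.id_apply]; split_ifs <;> simp

lemma E_apply (b : ZMod N) (f : V N) (a : ZMod N) (i : ℕ) :
    E b f (a, i) = if a + i = b then f (a, i) else 0 := rfl

lemma X_apply (f : V N) (a : ZMod N) (i : ℕ) :
    X c f (a, i) = if 1 ≤ i ∧ i < c a then f (a, i - 1) else 0 := rfl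

lemma X_pow_apply (n : ℕ) (f : V N) (a : ZMod N) (i : ℕ) (hn : 0 < n) :
    (X c ^ n) f (a, i) = if n ≤ i ∧ i < c a then f (a, i - n) else 0 := by
  induction n, hn using Nat.le_induction generalizing i with
  | base => rw [pow_one, X_apply]
  | succ n hn ih =>
    rw [pow_succ', Module.End.mul_apply, X_apply]
    split_ifs with h1 h2 h2
    · rw [ih, if_pos (by omega)]
      congr 2
      omega
    · rw [ih, if_neg (by omega)]
    · omega
    · rfl

lemma E_mul (a b : ZMod N) : E a * E b = if a = b then E a else 0 := by
  ext f ⟨d, i⟩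
  rw [Module.End.mul_apply, E_apply, E_apply]
  by_cases hab : a = b
  · subst hab
    rw [if_pos rfl, E_apply]
    split_ifs <;> rfl
  · rw [if_neg hab, LinearMap.zero_apply, Pi.zero_apply]
    split_ifs with h1 h2
    · exact absurd (h1.symm.trans h2) hab
    · rfl
    · rfl

lemma sum_E [NeZero N] : ∑ a : ZMod N, E a = 1 := by
  ext f ⟨d, i⟩
  rw [LinearMap.sum_apply, Finset.sum_apply]
  simp [E_apply]

lemma X_mul_E (a : ZMod N) : X c * E a = E (a + 1) * X c := by
  ext f ⟨d, i⟩
  rw [Module.End.mul_apply, Module.End.mul_apply, X_apply, E_apply, E_apply, X_apply]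
  by_cases h : 1 ≤ i ∧ i < c d
  · have h1 : d + ((i - 1 : ℕ) : ZMod N) = a ↔ d + (i : ZMod N) = a + 1 := by
      rw [Nat.cast_sub h.1, Nat.cast_one]
      constructor <;> intro h <;> linear_combination h
    simp only [if_pos h, h1]
  · simp only [if_neg h, ite_self]

lemma X_pow_mul_E (n : ℕ) (a : ZMod N) : X c ^ n * E a = E (a + (n : ZMod N)) * X c ^ n := by
  induction n generalizing a with
  | zero => simp
  | succ n ih =>
    rw [pow_succ, mul_assoc, X_mul_E, ← mul_assoc, ih, mul_assoc]
    congr 2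
    push_cast; ring

/-- The span of the paths is closed under products. -/
def alg [NeZero N] : Subalgebra (ZMod 2) (Module.End (ZMod 2) (V N)) :=
  (Submodule.span (ZMod 2) {y | ∃ (n : ℕ) (a : ZMod N), y = X c ^ n * E a}).toSubalgebra
    (by
      rw [← sum_E]
      exact Submodule.sum_mem _ fun a _ => Submodule.subset_span ⟨0, a, by simp⟩)
    (by
      intro y z hy hz
      have := Submodule.mul_mem_mul hy hz
      rw [Submodule.span_mul_span] at this
      refine Submodule.span_le.2 ?_ this
      rintro _ ⟨_, ⟨n, a, rfl⟩, _, ⟨m, b, rfl⟩, rfl⟩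
      have h : X c ^ n * E a * (X c ^ m * E b) = X c ^ (n + m) * (E (a - (m : ZMod N)) * E b) := by
        have h1 := X_pow_mul_E c m (a - m)
        rw [sub_add_cancel] at h1
        rw [mul_assoc, ← mul_assoc (E a), ← h1, pow_add, mul_assoc, mul_assoc]
      dsimp only
      rw [h, E_mul]
      split_ifs
      · exact Submodule.subset_span ⟨_, _, rfl⟩
      · rw [mul_zero]
        exact zero_mem _)

variable {c} in
/-- The condition `c v ≤ c (v + 1) + 1` on Kupisch series propagates along the cycle. -/
lemma le_add_of_le (hc : ∀ v, c v ≤ c (v + 1) + 1) (v : ZMod N) (i : ℕ) :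
    c v ≤ c (v + (i : ZMod N)) + i := by
  induction i with
  | zero => simp
  | succ i ih =>
    have := hc (v + i)
    rw [add_assoc v] at this
    rw [Nat.cast_succ]
    omega

variable {c} in
/-- The algebra spanned by the paths has Kupisch series `c`. -/
def nakData [NeZero N] (h0 : ∀ v, 0 < c v) (hc : ∀ v, c v ≤ c (v + 1) + 1) :
    NakData (ZMod 2) (alg c) N c where
  e a := ⟨E a, Submodule.subset_span ⟨0, a, by simp⟩⟩
  x := ⟨X c, by
    rw [← mul_one (X c), ← sum_E, Finset.mul_sum]
    exact Submodule.sum_mem _ fun a _ => Submodule.subset_span ⟨1, a, by rw [pow_one]⟩⟩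
  e_mul a b := by
    refine Subtype.ext ?_
    change E a * E b = _
    rw [E_mul]
    split_ifs <;> rfl
  sum_e := by
    refine Subtype.ext ?_
    rw [AddSubmonoidClass.coe_finsetSum]
    exact sum_E
  x_mul a := Subtype.ext (X_mul_E c a)
  span_eq := by
    rw [eq_top_iff]
    rintro ⟨y, hy⟩ -
    change y ∈ Submodule.span (ZMod 2) _ at hy
    have key : ∀ y (hy : y ∈ Submodule.span (ZMod 2)
        {y | ∃ (n : ℕ) (a : ZMod N), y = X c ^ n * E a}), ∃ z ∈ Submodule.span (ZMod 2)
        {y : alg c | ∃ (n : ℕ) (a : ZMod N), (y : Module.End (ZMod 2) (V N)) = X c ^ n * E a},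
        (z : Module.End (ZMod 2) (V N)) = y := by
      intro y hy
      induction hy using Submodule.span_induction with
      | mem y hy =>
        exact ⟨⟨y, Submodule.subset_span hy⟩, Submodule.subset_span hy, rfl⟩
      | zero => exact ⟨0, zero_mem _, rfl⟩
      | add y z _ _ h1 h2 =>
        obtain ⟨y', h1, rfl⟩ := h1
        obtain ⟨z', h2, rfl⟩ := h2
        exact ⟨y' + z', add_mem h1 h2, rfl⟩
      | smul s y _ h1 =>
        obtain ⟨y', h1, rfl⟩ := h1
        exact ⟨s • y', Submodule.smul_mem _ s h1, rfl⟩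
    obtain ⟨z, hz, h⟩ := key y hy
    obtain rfl : z = ⟨y, hy⟩ := Subtype.ext h
    refine Submodule.span_mono ?_ hz
    rintro w ⟨n, a, hw⟩
    exact ⟨n, a, Subtype.ext hw⟩
  path_eq_zero a := by
    refine Subtype.ext ?_
    change X c ^ c a * E a = 0
    ext f ⟨b, i⟩
    rw [Module.End.mul_apply, X_pow_apply c _ _ _ _ (h0 a), E_apply]
    split_ifs with h1 h2
    · -- a path from `b` to `a` of length `i - c a` composes to one of length `i ≥ c b`
      have := le_add_of_le hc b (i - c a)
      rw [h2] at this
      omega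
    · rfl
    · rfl
  path_ne_zero a n hn h := by
    have h1 : X c ^ n * E a = 0 := congrArg Subtype.val h
    have h2 : (X c ^ n * E a) (Pi.single (a, 0) 1) (a, n) = 0 := by rw [h1]; rfl
    rw [Module.End.mul_apply] at h2
    rcases Nat.eq_zero_or_pos n with rfl | hn0
    · simp [E_apply] at h2
    · rw [X_pow_apply c _ _ _ _ hn0, if_pos ⟨le_rfl, hn⟩, Nat.sub_self, E_apply] at h2
      simp at h2

end Model

/-- The Kupisch series `sharpC` is admissible. -/
lemma sharpC_le (r : ℕ) (v : ZMod (r + 2)) :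
    sharpC (r + 2) v ≤ sharpC (r + 2) (v + 1) + 1 := by
  by_cases h : v = -1
  · subst h
    rw [neg_add_cancel, sharpC, sharpC, if_pos rfl, if_pos rfl]
    split_ifs <;> omega
  · have h1 : v + 1 ≠ 0 := fun h1 => h (eq_neg_of_add_eq_zero_left h1)
    rw [sharpC, sharpC, if_neg h, if_neg h1]
    split_ifs <;> omega

end PhiDim

namespace PhiDim

/-- **Theorem (B).** For a cyclic Nakayama artin algebra of infinite global dimension
given by an irredundant system of `r` monomial relations, `φdim Λ ≤ 2r`; and this bound
is sharp: for every `r ≥ 1` there is such an algebra with `φdim Λ = 2r`. -/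
theorem phiDim_le_two_mul_relations_and_sharp :
    (∀ (R Λ : Type) (_ : CommRing R) (_ : Ring Λ) (_ : Algebra R Λ)
        (pres : CyclicNakayama R Λ), HasInfiniteGlobalDim Λ →
        phiDim Λ ≤ ((2 * pres.r : ℕ) : ℕ∞)) ∧
    (∀ r : ℕ, 1 ≤ r → ∃ (R Λ : Type) (_ : CommRing R) (_ : Ring Λ) (_ : Algebra R Λ)
        (pres : CyclicNakayama R Λ), pres.r = r ∧ HasInfiniteGlobalDim Λ ∧
        phiDim Λ = ((2 * r : ℕ) : ℕ∞)) := by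
  refine ⟨fun R Λ _ _ _ pres _ => phiDim_le pres, fun r hr => ?_⟩
  have D := Model.nakData (fun v => by have := NakData.two_le_sharpC v; omega) (sharpC_le r)
  have := D.finite_algebra
  have : Finite (Model.alg (sharpC (r + 2))) := Module.finite_of_finite (ZMod 2)
  exact ⟨ZMod 2, Model.alg (sharpC (r + 2)), inferInstance, inferInstance, inferInstance,
    D.pres hr, rfl, sharp_infinite (pres := D.pres hr) fun _ => rfl,
    sharp_phiDim (pres := D.pres hr) (fun _ => rfl) rfl⟩

end PhiDim
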